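/- With the same Beurling prime system assumptions (π_P(x) = Li(x) + O(x^α), 0 < α < 1), the second moment of the reciprocal Beurling zeta function on the 1-line exists: lim_{T→∞} (1/T)∫_1^T |ζ_P(1+it)|^{−2} dt = ∑_n e_n²/ν_n², and the series converges. -/

import Mathlib

/-!
On the line `Re s = 1` the reciprocal `1 / Z` is, up to a small relative error, the Euler product over
the Beurling primes up to `X = T ^ (2 / (1 - α))`, uniformly for `1 ≤ t ≤ T`
(`norm_inv_sub_euler_le`): partial summation compares `∑ p ^ (-s)` over `X < p ≤ Y` with
`∫ x ^ (-s) / log x`, and the latter is `≪ 1 / log X` by oscillation. The Euler product expands into a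
Dirichlet polynomial over squarefree Beurling integers, indexed by finite sets `S` of primes and with
frequencies `lam ℓ S`.

The terms with `lam ℓ S > u` are negligible in mean square. A large-sieve type inequality
(`mean_sq_le`), with no spacing assumption, reduces this to counting squarefree integers in windows of
logarithmic length `1 / T`. Chebyshev's device, applied twice, gives
`≪ e ^ v (1 / T + (2 + v) ^ (-3 / 2))` integers with logarithm in `(v, v + 1 / T]` (`cnt_le`). The first
term contributes `O(log T / T)` to the mean square, by Mertens (`powerset_sum_le`). The second one
contributes at most a constant times the tail over `lam ℓ S > u` of a convergent series independent
of `T` (`summable_weight`), hence is small when `u` is large.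

The remaining finite sum over `lam ℓ S ≤ u` equals `∑ e n / ν n ^ s` over `log (ν n) ≤ u`, because
two absolutely convergent Dirichlet series with the same values have the same coefficients
(`sum_trm_eq`). Its frequencies are distinct, so its mean square is the partial sum of
`∑ e n ^ 2 / ν n ^ 2` (`tendsto_mean_sq_poly`). Letting `u` tend to infinity (`mean_sq_limit`) gives both
the convergence of that series and the limit.
-/

open Filter Asymptotics

/-! ### Squarefree Beurling integers in short intervals -/

/-- Logarithm of the squarefree Beurling integer `∏_{j ∈ S} p_j`, where `ℓ j = log p_j`. -/
noncomputable def lam (ℓ : ℕ → ℝ) (S : Finset ℕ) : ℝ := ∑ j ∈ S, ℓ j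

/-- Number (as a real) of squarefree Beurling integers composed of primes with index in `G` whose
logarithm lies in `(u, u + δ]`. -/
noncomputable def cnt (ℓ : ℕ → ℝ) (G : Finset ℕ) (u δ : ℝ) : ℝ :=
  ((G.powerset.filter (fun S => u < lam ℓ S ∧ lam ℓ S ≤ u + δ)).card : ℝ)

/-- The information on the primes used for counting squarefree integers: a short-interval bound
for the weighted count of primes (`short`), and a Mertens-type bound (`mert`). The constants are
uniform in the finite set `G` of admissible primes. -/
structure Reg (ℓ : ℕ → ℝ) (C β : ℝ) : Prop where
  pos : ∀ j, 0 < ℓ j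
  one_le : 1 ≤ C
  β_pos : 0 < β
  β_lt : β < 1
  short : ∀ (G : Finset ℕ) (u δ : ℝ), 0 < δ → δ ≤ 1 →
    ∑ j ∈ G with (u < ℓ j ∧ ℓ j ≤ u + δ), ℓ j ≤ C * (δ * Real.exp u + Real.exp (β * u))
  mert : ∀ (G : Finset ℕ) (u : ℝ), 0 ≤ u →
    ∑ S ∈ G.powerset with lam ℓ S ≤ u, Real.exp (-lam ℓ S) ≤ C * (1 + u)

lemma lam_nonneg {ℓ : ℕ → ℝ} (h : ∀ j, 0 < ℓ j) (S : Finset ℕ) : 0 ≤ lam ℓ S :=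
  Finset.sum_nonneg fun j _ => (h j).le

lemma cnt_nonneg (ℓ : ℕ → ℝ) (G : Finset ℕ) (u δ : ℝ) : 0 ≤ cnt ℓ G u δ := Nat.cast_nonneg _

lemma cnt_mono (ℓ : ℕ → ℝ) (G : Finset ℕ) (u : ℝ) {δ δ' : ℝ} (h : δ ≤ δ') :
    cnt ℓ G u δ ≤ cnt ℓ G u δ' := by
  unfold cnt
  refine Nat.cast_le.mpr (Finset.card_le_card ?_)
  intro S hS
  simp only [Finset.mem_filter] at hS ⊢
  exact ⟨hS.1, hS.2.1, by linarith [hS.2.2]⟩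

lemma sum_le_of_fibers {ι κ : Type*} [DecidableEq κ] (s : Finset ι) (k : ι → κ) (w : ι → ℝ)
    (h : κ → ℝ) (h0 : ∀ n, 0 ≤ h n) (hs : Summable h)
    (H : ∀ n, ∑ i ∈ s with k i = n, w i ≤ h n) : ∑ i ∈ s, w i ≤ ∑' n, h n := by
  calc ∑ i ∈ s, w i = ∑ n ∈ s.image k, ∑ i ∈ s with k i = n, w i :=
        (Finset.sum_fiberwise_of_maps_to (fun i hi => Finset.mem_image_of_mem k hi) w).symm
    _ ≤ ∑ n ∈ s.image k, h n := Finset.sum_le_sum fun n _ => H n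
    _ ≤ ∑' n, h n := hs.sum_le_tsum _ fun n _ => h0 n

lemma sum_le_mul_cnt {ℓ : ℕ → ℝ} {G : Finset ℕ} {u δ b : ℝ} (s : Finset (Finset ℕ))
    (w : Finset ℕ → ℝ) (hb : 0 ≤ b)
    (h : ∀ S ∈ s, S ⊆ G ∧ u < lam ℓ S ∧ lam ℓ S ≤ u + δ ∧ w S ≤ b) :
    ∑ S ∈ s, w S ≤ b * cnt ℓ G u δ := by
  calc ∑ S ∈ s, w S ≤ ∑ S ∈ s, b := Finset.sum_le_sum fun S hS => (h S hS).2.2.2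
    _ = b * (s.card : ℝ) := by simp [mul_comm]
    _ ≤ b * cnt ℓ G u δ := by
      refine mul_le_mul_of_nonneg_left (Nat.cast_le.mpr (Finset.card_le_card fun S hS => ?_)) hb
      obtain ⟨h1, h2, h3, _⟩ := h S hS
      simp [h1, h2, h3]

/-- Chebyshev's device: weighing each squarefree integer by its logarithm and removing one prime
factor bounds the count in a window by counts in shifted windows. -/
lemma mul_cnt_le {ℓ : ℕ → ℝ} (hℓ : ∀ j, 0 < ℓ j) (G : Finset ℕ) (u δ : ℝ) :
    u * cnt ℓ G u δ ≤ ∑ j ∈ G, ℓ j * cnt ℓ G (u - ℓ j) δ := by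
  classical
  set W := G.powerset.filter (fun S => u < lam ℓ S ∧ lam ℓ S ≤ u + δ) with hW
  have h1 : u * cnt ℓ G u δ ≤ ∑ S ∈ W, lam ℓ S := by
    have : ∑ S ∈ W, u ≤ ∑ S ∈ W, lam ℓ S :=
      Finset.sum_le_sum fun S hS => ((Finset.mem_filter.mp hS).2.1).le
    simpa [cnt, ← hW, mul_comm] using this
  have h2 : ∑ S ∈ W, lam ℓ S = ∑ j ∈ G, ∑ S ∈ W with j ∈ S, ℓ j := by
    have : ∀ S ∈ W, lam ℓ S = ∑ j ∈ G, if j ∈ S then ℓ j else 0 := by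
      intro S hS
      have hSG : S ⊆ G := by simpa using (Finset.mem_filter.mp hS).1
      rw [← Finset.sum_filter, lam]
      congr 1
      ext j
      simp only [Finset.mem_filter]
      exact ⟨fun h => ⟨hSG h, h⟩, fun h => h.2⟩
    rw [Finset.sum_congr rfl this, Finset.sum_comm]
    simp_rw [← Finset.sum_filter]
  rw [h2] at h1
  refine h1.trans (Finset.sum_le_sum fun j hj => ?_)
  rw [Finset.sum_const, nsmul_eq_mul, mul_comm]
  refine mul_le_mul_of_nonneg_left (Nat.cast_le.mpr ?_) (hℓ j).le
  refine Finset.card_le_card_of_injOn (fun S => S.erase j) ?_ ?_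
  · intro S hS
    simp only [hW, Finset.coe_filter, Finset.mem_filter, Finset.mem_powerset, Set.mem_ofPred_eq] at hS ⊢
    obtain ⟨⟨hSG, hl, hr⟩, hjS⟩ := hS
    have : lam ℓ (S.erase j) + ℓ j = lam ℓ S := Finset.sum_erase_add _ _ hjS
    exact ⟨(Finset.erase_subset _ _).trans hSG, by linarith, by linarith⟩
  · intro S hS S' hS' h
    simp only [Finset.coe_filter, Set.mem_ofPred_eq] at hS hS'
    have h : S.erase j = S'.erase j := h
    rw [← Finset.insert_erase hS.2, ← Finset.insert_erase hS'.2, h]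

/-- The part of the sum in `mul_cnt_le` coming from primes with `κ < log p`, estimated by fixing
the cofactor and counting primes in a short interval. -/
lemma large_part {ℓ : ℕ → ℝ} {C β : ℝ} (R : Reg ℓ C β) (G : Finset ℕ) (u δ κ : ℝ) (hδ : 0 < δ)
    (hδ1 : δ ≤ 1) :
    ∑ j ∈ G with κ < ℓ j, ℓ j * cnt ℓ G (u - ℓ j) δ ≤
      ∑ S ∈ G.powerset with lam ℓ S ≤ u + δ - κ,
        C * (δ * Real.exp (u - lam ℓ S) + Real.exp (β * (u - lam ℓ S))) := by
  classical
  have e1 : ∀ j ∈ G.filter (fun j => κ < ℓ j), ℓ j * cnt ℓ G (u - ℓ j) δ =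
      ∑ S ∈ G.powerset with lam ℓ S ≤ u + δ - κ,
        if (u - lam ℓ S < ℓ j ∧ ℓ j ≤ u - lam ℓ S + δ) then ℓ j else 0 := by
    intro j hj
    have hj := (Finset.mem_filter.mp hj).2
    rw [← Finset.sum_filter, Finset.sum_const, nsmul_eq_mul, mul_comm, cnt, Finset.filter_filter]
    congr 3
    ext S
    simp only [Finset.mem_filter]
    constructor
    · rintro ⟨h1, h2, h3⟩; exact ⟨h1, by linarith, by linarith, by linarith⟩
    · rintro ⟨h1, h2, h3, h4⟩; exact ⟨h1, by linarith, by linarith⟩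
  rw [Finset.sum_congr rfl e1, Finset.sum_comm]
  refine Finset.sum_le_sum fun S _ => ?_
  refine le_trans ?_ (R.short (G.filter fun j => κ < ℓ j) (u - lam ℓ S) δ hδ hδ1)
  rw [← Finset.sum_filter]

lemma exp_beta_le {β v : ℝ} (h0 : 0 < β) (h1 : β < 1) (hv : -1 ≤ v) :
    Real.exp (β * v) ≤ 3 * Real.exp v := by
  have : Real.exp (β * v) ≤ Real.exp (1 + v) := by
    apply Real.exp_le_exp.mpr; nlinarith
  rw [Real.exp_add] at this
  have := Real.exp_one_lt_d9
  nlinarith [Real.exp_pos v]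

/-- Chebyshev-type bound for squarefree integers in windows of multiplicative length `e`. -/
lemma cnt_one_le {ℓ : ℕ → ℝ} {C β : ℝ} (R : Reg ℓ C β) (G : Finset ℕ) (u : ℝ) :
    cnt ℓ G u 1 ≤ 12 * C ^ 2 * Real.exp u := by
  have hC := R.one_le
  have hE := Real.exp_pos u
  rcases le_or_gt 1 u with hu | hu
  · have h1 := mul_cnt_le R.pos G u 1
    have h2 := large_part R G u 1 0 one_pos le_rfl
    rw [Finset.filter_true_of_mem (fun j _ => R.pos j)] at h2
    have h3 : ∑ S ∈ G.powerset with lam ℓ S ≤ u + 1 - 0,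
        C * (1 * Real.exp (u - lam ℓ S) + Real.exp (β * (u - lam ℓ S))) ≤
        ∑ S ∈ G.powerset with lam ℓ S ≤ u + 1, (4 * C * Real.exp u) * Real.exp (-lam ℓ S) := by
      rw [sub_zero]
      refine Finset.sum_le_sum fun S hS => ?_
      have hS := (Finset.mem_filter.mp hS).2
      have := exp_beta_le R.β_pos R.β_lt (v := u - lam ℓ S) (by linarith)
      rw [mul_assoc, ← Real.exp_add, ← sub_eq_add_neg]
      nlinarith
    replace h3 := h3.trans_eq (Finset.mul_sum _ _ _).symm
    have h4 := R.mert G (u + 1) (by linarith)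
    have h5 : u * cnt ℓ G u 1 ≤ (4 * C * Real.exp u) * (C * (1 + (u + 1))) :=
      (h1.trans h2).trans (h3.trans (mul_le_mul_of_nonneg_left h4 (by positivity)))
    have h6 : (4 * C * Real.exp u) * (C * (1 + (u + 1))) ≤ u * (12 * C ^ 2 * Real.exp u) := by
      have : 0 ≤ C ^ 2 * Real.exp u := by positivity
      nlinarith
    exact le_of_mul_le_mul_left (h5.trans h6) (by linarith)
  · have h1 : cnt ℓ G u 1 ≤ ∑ S ∈ G.powerset with lam ℓ S ≤ 2, (3 * Real.exp u) * Real.exp (-lam ℓ S) := by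
      have : cnt ℓ G u 1 = ∑ S ∈ G.powerset.filter (fun S => u < lam ℓ S ∧ lam ℓ S ≤ u + 1), (1:ℝ) := by
        simp [cnt]
      rw [this]
      refine (Finset.sum_le_sum (g := fun S => (3 * Real.exp u) * Real.exp (-lam ℓ S)) ?_).trans
        (Finset.sum_le_sum_of_subset_of_nonneg ?_ fun _ _ _ => by positivity)
      · intro S hS
        have hS := (Finset.mem_filter.mp hS).2
        have h1 : 1 ≤ Real.exp (1 + u + -lam ℓ S) := Real.one_le_exp (by linarith)
        rw [Real.exp_add, Real.exp_add] at h1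
        have := Real.exp_one_lt_d9
        have h3 : 0 < Real.exp u * Real.exp (-lam ℓ S) := by positivity
        nlinarith
      · intro S hS
        simp only [Finset.mem_filter] at hS ⊢
        exact ⟨hS.1, by linarith⟩
    rw [← Finset.mul_sum] at h1
    have h4 := R.mert G 2 (by norm_num)
    have h5 := mul_le_mul_of_nonneg_left h4 (show 0 ≤ 3 * Real.exp u by positivity)
    have h6 : 0 ≤ C * Real.exp u := by positivity
    nlinarith

/-- Rankin-type sum: since there are `≪ e^u` squarefree integers up to `e^u`, the sum of
`e^{-β λ}` over them is dominated by its top range. -/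
lemma rankin {ℓ : ℕ → ℝ} {C β : ℝ} (R : Reg ℓ C β) :
    ∃ D, 1 ≤ D ∧ ∀ (G : Finset ℕ) (v : ℝ),
      ∑ S ∈ G.powerset with lam ℓ S ≤ v, Real.exp (-(β * lam ℓ S)) ≤ D * Real.exp ((1 - β) * v) := by
  have hβ := R.β_lt
  have hC := R.one_le
  set r := Real.exp (-(1 - β)) with hr
  have hr1 : r < 1 := by
    have := Real.exp_lt_exp.mpr (show -(1 - β) < 0 by linarith)
    rwa [Real.exp_zero] at this
  have hr0 : 0 < r := Real.exp_pos _
  have hsum := summable_geometric_of_lt_one hr0.le hr1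
  have ht : 0 ≤ ∑' n : ℕ, r ^ n := tsum_nonneg fun n => by positivity
  refine ⟨1 + 12 * C ^ 2 * ∑' n : ℕ, r ^ n, by nlinarith [sq_nonneg C], fun G v => ?_⟩
  have key := sum_le_of_fibers (G.powerset.filter fun S => lam ℓ S ≤ v)
    (fun S => ⌊v - lam ℓ S⌋₊) (fun S => Real.exp (-(β * lam ℓ S)))
    (fun n => (12 * C ^ 2 * Real.exp ((1 - β) * v)) * r ^ n) (fun n => by positivity)
    (hsum.mul_left _) ?_
  · rw [tsum_mul_left] at key
    refine key.trans ?_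
    have := Real.exp_pos ((1 - β) * v)
    nlinarith
  · intro n
    have h1 := sum_le_mul_cnt (ℓ := ℓ) (G := G) (u := v - n - 1) (δ := 1)
      (b := Real.exp (-(β * (v - n - 1))))
      ((G.powerset.filter fun S => lam ℓ S ≤ v).filter fun S => ⌊v - lam ℓ S⌋₊ = n)
      (fun S => Real.exp (-(β * lam ℓ S))) (Real.exp_pos _).le ?_
    · refine h1.trans ((mul_le_mul_of_nonneg_left (cnt_one_le R G _) (Real.exp_pos _).le).trans ?_)
      have e1 : Real.exp (-(β * (v - n - 1))) * Real.exp (v - n - 1) =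
          Real.exp ((1 - β) * v) * r ^ n * r := by
        rw [← Real.exp_add, hr, ← Real.exp_nat_mul, ← Real.exp_add, ← Real.exp_add]
        congr 1; ring
      have e2 : 0 ≤ Real.exp ((1 - β) * v) * r ^ n := by positivity
      calc _ = 12 * C ^ 2 * (Real.exp (-(β * (v - n - 1))) * Real.exp (v - n - 1)) := by ring
        _ = 12 * C ^ 2 * (Real.exp ((1 - β) * v) * r ^ n * r) := by rw [e1]
        _ ≤ 12 * C ^ 2 * (Real.exp ((1 - β) * v) * r ^ n * 1) := by gcongr
        _ = _ := by ring
    · intro S hS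
      simp only [Finset.mem_filter, Finset.mem_powerset] at hS
      obtain ⟨⟨h1, h2⟩, h3⟩ := hS
      have h4 := (Nat.floor_eq_iff (by linarith : 0 ≤ v - lam ℓ S)).mp h3
      refine ⟨h1, by linarith, by linarith, Real.exp_le_exp.mpr ?_⟩
      nlinarith [R.β_pos]

lemma large_part' {ℓ : ℕ → ℝ} {C β : ℝ} (R : Reg ℓ C β) :
    ∃ D, 1 ≤ D ∧ ∀ (G : Finset ℕ) (u δ κ : ℝ), 0 < δ → δ ≤ 1 → 0 ≤ κ → κ ≤ u →
      ∑ j ∈ G with κ < ℓ j, ℓ j * cnt ℓ G (u - ℓ j) δ ≤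
        D * Real.exp u * (δ * (2 + u) + Real.exp (-((1 - β) * κ))) := by
  obtain ⟨D, hD, h⟩ := rankin R
  have hC := R.one_le
  refine ⟨C ^ 2 + 3 * C * D, by nlinarith, fun G u δ κ hδ hδ1 hκ hκu => ?_⟩
  refine (large_part R G u δ κ hδ hδ1).trans ?_
  have h1 := h G (u + δ - κ)
  have h2 := R.mert G (u + δ - κ) (by linarith)
  have e : ∑ S ∈ G.powerset with lam ℓ S ≤ u + δ - κ,
        C * (δ * Real.exp (u - lam ℓ S) + Real.exp (β * (u - lam ℓ S))) =
      C * δ * Real.exp u * (∑ S ∈ G.powerset with lam ℓ S ≤ u + δ - κ, Real.exp (-lam ℓ S)) +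
      C * Real.exp (β * u) *
        (∑ S ∈ G.powerset with lam ℓ S ≤ u + δ - κ, Real.exp (-(β * lam ℓ S))) := by
    rw [Finset.mul_sum, Finset.mul_sum, ← Finset.sum_add_distrib]
    refine Finset.sum_congr rfl fun S _ => ?_
    rw [mul_assoc (C * δ), ← Real.exp_add, mul_assoc C (Real.exp _), ← Real.exp_add]
    rw [mul_add, mul_assoc]; congr 3 <;> ring_nf
  rw [e]
  have hE := Real.exp_pos u
  have h3 : C * δ * Real.exp u * (∑ S ∈ G.powerset with lam ℓ S ≤ u + δ - κ, Real.exp (-lam ℓ S))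
      ≤ C ^ 2 * Real.exp u * (δ * (2 + u)) := by
    calc _ ≤ C * δ * Real.exp u * (C * (1 + (u + δ - κ))) := by gcongr
      _ ≤ C * δ * Real.exp u * (C * (2 + u)) := by
        gcongr C * δ * Real.exp u * (C * ?_); linarith
      _ = _ := by ring
  have h4 : Real.exp (β * u) * Real.exp ((1 - β) * (u + δ - κ)) ≤
      3 * (Real.exp u * Real.exp (-((1 - β) * κ))) := by
    have : Real.exp (β * u) * Real.exp ((1 - β) * (u + δ - κ)) ≤
        Real.exp (1 + u + -((1 - β) * κ)) := by
      rw [← Real.exp_add]; apply Real.exp_le_exp.mpr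
      nlinarith [R.β_pos, R.β_lt]
    rw [Real.exp_add, Real.exp_add] at this
    have h1 := Real.exp_one_lt_d9
    have : 0 < Real.exp u * Real.exp (-((1 - β) * κ)) := by positivity
    nlinarith
  have h5 : C * Real.exp (β * u) *
        (∑ S ∈ G.powerset with lam ℓ S ≤ u + δ - κ, Real.exp (-(β * lam ℓ S))) ≤
      3 * C * D * Real.exp u * Real.exp (-((1 - β) * κ)) := by
    calc _ ≤ C * Real.exp (β * u) * (D * Real.exp ((1 - β) * (u + δ - κ))) := by gcongr
      _ = C * D * (Real.exp (β * u) * Real.exp ((1 - β) * (u + δ - κ))) := by ring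
      _ ≤ C * D * (3 * (Real.exp u * Real.exp (-((1 - β) * κ)))) := by gcongr
      _ = _ := by ring
  have h6 : 0 ≤ C ^ 2 * Real.exp u * Real.exp (-((1 - β) * κ)) := by positivity
  have h7 : 0 ≤ 3 * C * D * Real.exp u * (δ * (2 + u)) := by
    have : 0 ≤ u := by linarith
    positivity
  calc _ ≤ C ^ 2 * Real.exp u * (δ * (2 + u)) +
      3 * C * D * Real.exp u * Real.exp (-((1 - β) * κ)) := add_le_add h3 h5
    _ ≤ _ := by nlinarith

/-- First short-interval bound. Its error term `1 / u` is just too large to be integrable. -/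
lemma cnt_le_first {ℓ : ℕ → ℝ} {C β : ℝ} (R : Reg ℓ C β) :
    ∃ D, 1 ≤ D ∧ ∀ (G : Finset ℕ) (u δ : ℝ), 0 < δ → δ ≤ 1 → 0 < u →
      cnt ℓ G u δ ≤ D * Real.exp u * (δ + 1 / u) := by
  obtain ⟨D, hD, h⟩ := large_part' R
  have hC := R.one_le
  refine ⟨12 * C ^ 2 + 3 * D, by nlinarith, fun G u δ hδ hδ1 hu => ?_⟩
  have hE := Real.exp_pos u
  rcases le_or_gt u 1 with hu1 | hu1
  · have h1 := (cnt_mono ℓ G u hδ1).trans (cnt_one_le R G u)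
    have h2 : 1 ≤ δ + 1 / u := by
      have : 1 ≤ 1 / u := by rw [le_div_iff₀ hu]; linarith
      linarith
    have h3 : 0 ≤ D * Real.exp u := by positivity
    have h4 : 0 ≤ C ^ 2 * Real.exp u := by positivity
    nlinarith
  · have h1 := mul_cnt_le R.pos G u δ
    have h2 := h G u δ 0 hδ hδ1 le_rfl hu.le
    rw [Finset.filter_true_of_mem (fun j _ => R.pos j)] at h2
    simp only [mul_zero, neg_zero, Real.exp_zero] at h2
    have h3 : D * Real.exp u * (δ * (2 + u) + 1) ≤
        u * ((12 * C ^ 2 + 3 * D) * Real.exp u * (δ + 1 / u)) := by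
      have : u * ((12 * C ^ 2 + 3 * D) * Real.exp u * (δ + 1 / u)) =
        (12 * C ^ 2 + 3 * D) * Real.exp u * (δ * u + 1) := by field_simp
      rw [this, mul_assoc, mul_assoc, mul_comm (Real.exp u), mul_comm (Real.exp u), ← mul_assoc,
        ← mul_assoc]
      refine mul_le_mul_of_nonneg_right ?_ hE.le
      have : 0 ≤ 12 * C ^ 2 * (δ * u + 1) := by positivity
      have : D * (δ * (2 + u) + 1) ≤ 3 * D * (δ * u + 1) := by
        have : δ * (2 + u) + 1 ≤ 3 * (δ * u + 1) := by nlinarith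
        nlinarith
      nlinarith
    exact le_of_mul_le_mul_left ((h1.trans h2).trans h3) hu

/-- Mertens-type bound for `∑ (log p) / p`. -/
lemma sum_log_div_le {ℓ : ℕ → ℝ} {C β : ℝ} (R : Reg ℓ C β) (G : Finset ℕ) (κ : ℝ) (hκ : 0 ≤ κ) :
    ∑ j ∈ G with ℓ j ≤ κ, ℓ j * Real.exp (-ℓ j) ≤ 4 * C * (κ + 2) := by
  have hC := R.one_le
  have hm : ∀ j ∈ G.filter (fun j => ℓ j ≤ κ), ⌈ℓ j⌉₊ ∈ Finset.range (⌈κ⌉₊ + 1) := by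
    intro j hj
    have := (Finset.mem_filter.mp hj).2
    exact Finset.mem_range.mpr (Nat.lt_succ_of_le (Nat.ceil_mono this))
  rw [← Finset.sum_fiberwise_of_maps_to hm]
  have hb : ∀ n ∈ Finset.range (⌈κ⌉₊ + 1),
      ∑ j ∈ (G.filter (fun j => ℓ j ≤ κ)) with ⌈ℓ j⌉₊ = n, ℓ j * Real.exp (-ℓ j) ≤ 4 * C := by
    intro n _
    have h1 := R.short (G.filter fun j => ℓ j ≤ κ) ((n:ℝ) - 1) 1 one_pos le_rfl
    have h2 := exp_beta_le R.β_pos R.β_lt (v := (n:ℝ) - 1) (by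
      have : (0:ℝ) ≤ n := Nat.cast_nonneg n
      linarith)
    have h3 : ∑ j ∈ (G.filter (fun j => ℓ j ≤ κ)) with ⌈ℓ j⌉₊ = n, ℓ j * Real.exp (-ℓ j) ≤
        ∑ j ∈ (G.filter (fun j => ℓ j ≤ κ)) with ((n:ℝ) - 1 < ℓ j ∧ ℓ j ≤ (n:ℝ) - 1 + 1),
          Real.exp (-((n:ℝ) - 1)) * ℓ j := by
      have hw : ∀ j ∈ (G.filter (fun j => ℓ j ≤ κ)).filter (fun j => ⌈ℓ j⌉₊ = n),
          (n:ℝ) - 1 < ℓ j ∧ ℓ j ≤ n := by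
        intro j hj
        have hj := (Finset.mem_filter.mp hj).2
        have ha := Nat.le_ceil (ℓ j)
        have hb := Nat.ceil_lt_add_one (R.pos j).le
        rw [hj] at ha hb
        exact ⟨by linarith, ha⟩
      refine (Finset.sum_le_sum (g := fun j => Real.exp (-((n:ℝ) - 1)) * ℓ j) ?_).trans
        (Finset.sum_le_sum_of_subset_of_nonneg ?_ fun j _ _ =>
          mul_nonneg (Real.exp_pos _).le (R.pos j).le)
      · intro j hj
        rw [mul_comm]
        exact mul_le_mul_of_nonneg_right (Real.exp_le_exp.mpr (by linarith [(hw j hj).1]))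
          (R.pos j).le
      · intro j hj
        have := hw j hj
        exact Finset.mem_filter.mpr ⟨(Finset.mem_filter.mp hj).1, this.1, by linarith [this.2]⟩
    rw [← Finset.mul_sum] at h3
    refine h3.trans ((mul_le_mul_of_nonneg_left h1 (Real.exp_pos _).le).trans ?_)
    have h4 : Real.exp (-((n:ℝ) - 1)) * Real.exp ((n:ℝ) - 1) = 1 := by
      rw [← Real.exp_add]; simp
    calc _ ≤ Real.exp (-((n:ℝ) - 1)) * (C * (1 * Real.exp ((n:ℝ) - 1) + 3 * Real.exp ((n:ℝ) - 1))) := by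
          gcongr
      _ = 4 * C * (Real.exp (-((n:ℝ) - 1)) * Real.exp ((n:ℝ) - 1)) := by ring
      _ = 4 * C := by rw [h4, mul_one]
  refine (Finset.sum_le_sum hb).trans ?_
  rw [Finset.sum_const, nsmul_eq_mul, Finset.card_range, mul_comm]
  refine mul_le_mul_of_nonneg_left ?_ (by positivity)
  have := Nat.ceil_lt_add_one hκ
  push_cast; linarith

/-- Second short-interval bound, obtained by feeding `cnt_le_first` back into Chebyshev's device
for the primes with `log p ≤ √u`. The error term is now integrable, which is what makes the
near-coincidences among squarefree integers negligible in mean square. -/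
lemma cnt_le {ℓ : ℕ → ℝ} {C β : ℝ} (R : Reg ℓ C β) :
    ∃ D, 1 ≤ D ∧ ∀ (G : Finset ℕ) (u δ : ℝ), 0 < δ → δ ≤ 1 → -1 ≤ u →
      cnt ℓ G u δ ≤ D * Real.exp u * (δ + 1 / ((2 + u) * √(2 + u))) := by
  obtain ⟨D, hD, h⟩ := large_part' R
  obtain ⟨D₁, hD₁, h'⟩ := cnt_le_first R
  have hC := R.one_le
  have hβ : 0 < 1 - β := by linarith [R.β_lt]
  set B := 12 * C ^ 2 * 36 + 3 * (D₁ * (8 * C) * 4 + 2 * D + D / (1 - β)) with hB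
  have hB1 : 1 ≤ B := by
    have : 0 ≤ D / (1 - β) := by positivity
    nlinarith
  refine ⟨B, hB1, fun G u δ hδ hδ1 hu => ?_⟩
  have hE := Real.exp_pos u
  have hs : 0 < √(2 + u) := Real.sqrt_pos.mpr (by linarith)
  have hu2 : 0 < 2 + u := by linarith
  have hQ : 0 ≤ D / (1 - β) := by positivity
  rcases le_or_gt u 4 with hu4 | hu4
  · have h1 := (cnt_mono ℓ G u hδ1).trans (cnt_one_le R G u)
    have h2 : 1 ≤ 36 * (δ + 1 / ((2 + u) * √(2 + u))) := by
      have a1 : √(2 + u) ≤ 6 := by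
        rw [Real.sqrt_le_left (by norm_num)]; linarith
      have a2 : (2 + u) * √(2 + u) ≤ 6 * 6 := by gcongr; linarith
      have : 1 / 36 ≤ 1 / ((2 + u) * √(2 + u)) := by
        apply one_div_le_one_div_of_le (by positivity); linarith
      linarith
    have h3 : 12 * C ^ 2 * 36 ≤ B := by rw [hB]; nlinarith
    calc cnt ℓ G u δ ≤ 12 * C ^ 2 * Real.exp u * 1 := by linarith
      _ ≤ 12 * C ^ 2 * Real.exp u * (36 * (δ + 1 / ((2 + u) * √(2 + u)))) := by gcongr
      _ = (12 * C ^ 2 * 36) * Real.exp u * (δ + 1 / ((2 + u) * √(2 + u))) := by ring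
      _ ≤ _ := by gcongr
  · set κ := √u with hκ
    have hu0 : 0 < u := by linarith
    have hκκ : κ * κ = u := Real.mul_self_sqrt hu0.le
    have hκ2 : 2 ≤ κ := Real.le_sqrt_of_sq_le (by linarith)
    have hκu : 2 * κ ≤ u := by nlinarith
    have h1 := mul_cnt_le R.pos G u δ
    have h2 := h G u δ κ hδ hδ1 (by linarith) (by linarith)
    rw [← Finset.sum_filter_add_sum_filter_not G (fun j => κ < ℓ j)] at h1
    simp only [not_lt] at h1
    have h3 : ∑ j ∈ G with ℓ j ≤ κ, ℓ j * cnt ℓ G (u - ℓ j) δ ≤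
        D₁ * Real.exp u * (δ + 2 / u) * (4 * C * (κ + 2)) := by
      calc _ ≤ ∑ j ∈ G with ℓ j ≤ κ, D₁ * Real.exp u * (δ + 2 / u) * (ℓ j * Real.exp (-ℓ j)) := by
            refine Finset.sum_le_sum fun j hj => ?_
            have hj := (Finset.mem_filter.mp hj).2
            have a1 := h' G (u - ℓ j) δ hδ hδ1 (by linarith)
            have a2 : 1 / (u - ℓ j) ≤ 2 / u := by
              rw [div_le_div_iff₀ (by linarith) hu0]; linarith
            have a3 : Real.exp (u - ℓ j) = Real.exp u * Real.exp (-ℓ j) := by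
              rw [← Real.exp_add]; rfl
            have a4 := R.pos j
            calc _ ≤ ℓ j * (D₁ * (Real.exp u * Real.exp (-ℓ j)) * (δ + 2 / u)) := by
                  rw [← a3]
                  refine mul_le_mul_of_nonneg_left (a1.trans ?_) a4.le
                  gcongr
              _ = _ := by ring
        _ ≤ _ := by
          rw [← Finset.mul_sum]
          exact mul_le_mul_of_nonneg_left (sum_log_div_le R G κ (by linarith)) (by positivity)
    have h4 : Real.exp (-((1 - β) * κ)) ≤ 1 / ((1 - β) * κ) := by
      rw [Real.exp_neg, ← one_div]
      apply one_div_le_one_div_of_le (by positivity)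
      linarith [Real.add_one_le_exp ((1 - β) * κ)]
    have h5 : u * cnt ℓ G u δ ≤ u * (Real.exp u * ((D₁ * (8 * C) * 4 + 2 * D + D / (1 - β)) *
        (δ + 1 / (u * κ)))) := by
      have b1 : D₁ * Real.exp u * (δ + 2 / u) * (4 * C * (κ + 2)) ≤
          u * (Real.exp u * (D₁ * (8 * C) * (4 * (δ + 1 / (u * κ))))) := by
        have : (δ + 2 / u) * (κ + 2) ≤ u * (2 * (4 * (δ + 1 / (u * κ)))) := by
          have c1 : κ + 2 ≤ 2 * κ := by linarith
          calc (δ + 2 / u) * (κ + 2) ≤ (δ + 2 / u) * (2 * κ) := by gcongr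
            _ = 2 * κ * δ + 4 * κ / u := by ring
            _ = 2 * κ * δ + 4 / κ := by
              congr 1; rw [← hκκ]; field_simp
            _ ≤ 8 * (u * δ) + 8 / κ := by
              have : 2 * κ * δ ≤ u * δ := by gcongr
              have : 4 / κ ≤ 8 / κ := by gcongr; norm_num
              nlinarith
            _ = _ := by field_simp; norm_num
        calc _ = D₁ * Real.exp u * (4 * C) * ((δ + 2 / u) * (κ + 2)) := by ring
          _ ≤ D₁ * Real.exp u * (4 * C) * (u * (2 * (4 * (δ + 1 / (u * κ))))) := by gcongr
          _ = _ := by ring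
      have b2 : D * Real.exp u * (δ * (2 + u) + Real.exp (-((1 - β) * κ))) ≤
          u * (Real.exp u * ((2 * D + D / (1 - β)) * (δ + 1 / (u * κ)))) := by
        have c1 : δ * (2 + u) ≤ u * (2 * (δ + 1 / (u * κ))) := by
          have : 0 < 1 / (u * κ) := by positivity
          nlinarith
        have c2 : Real.exp (-((1 - β) * κ)) ≤ u * (1 / (1 - β) * (δ + 1 / (u * κ))) := by
          refine h4.trans ?_
          have : u * (1 / (1 - β) * (1 / (u * κ))) = 1 / ((1 - β) * κ) := by field_simp
          rw [← this]
          gcongr; linarith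
        calc _ ≤ D * Real.exp u * (u * (2 * (δ + 1 / (u * κ))) +
              u * (1 / (1 - β) * (δ + 1 / (u * κ)))) := by gcongr
          _ = _ := by ring
      have : u * cnt ℓ G u δ ≤ _ := h1.trans (add_le_add (h2.trans b2) (h3.trans b1))
      refine this.trans (le_of_eq ?_); ring
    have h6 := le_of_mul_le_mul_left h5 hu0
    have h7 : 1 / (u * κ) ≤ 3 * (1 / ((2 + u) * √(2 + u))) := by
      have a1 : √(2 + u) ≤ 2 * κ := by
        rw [Real.sqrt_le_left (by linarith)]; nlinarith
      have a2 : (2 + u) * √(2 + u) ≤ 3 / 2 * u * (2 * κ) := by gcongr; linarith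
      rw [mul_one_div, div_le_div_iff₀ (by positivity) (by positivity)]
      nlinarith
    have h8 : 0 ≤ D₁ * (8 * C) * 4 + 2 * D + D / (1 - β) := by positivity
    calc cnt ℓ G u δ ≤ _ := h6
      _ ≤ Real.exp u * ((D₁ * (8 * C) * 4 + 2 * D + D / (1 - β)) *
          (3 * (δ + 1 / ((2 + u) * √(2 + u))))) := by
        gcongr; linarith
      _ = 3 * (D₁ * (8 * C) * 4 + 2 * D + D / (1 - β)) * Real.exp u *
          (δ + 1 / ((2 + u) * √(2 + u))) := by ring
      _ ≤ _ := by
        gcongr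
        rw [hB]; nlinarith [sq_nonneg C]

/-- The near-coincidence weight is summable over all squarefree integers. -/
lemma summable_weight {ℓ : ℕ → ℝ} {C β : ℝ} (R : Reg ℓ C β) :
    Summable (fun S : Finset ℕ => Real.exp (-lam ℓ S) / ((1 + lam ℓ S) * √(1 + lam ℓ S))) := by
  have hC := R.one_le
  have h0 : ∀ S, 0 ≤ lam ℓ S := lam_nonneg R.pos
  have hsum : Summable (fun n : ℕ => (12 * C ^ 2 * 4) * (1 / (((n:ℝ) + 1) * √((n:ℝ) + 1)))) := by
    apply Summable.mul_left
    have := (summable_nat_add_iff 1).mpr (Real.summable_one_div_nat_rpow.mpr (by norm_num : (1:ℝ) < 3 / 2))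
    refine this.congr fun n => ?_
    have hn : (0:ℝ) < (n:ℝ) + 1 := by positivity
    rw [show (3 / 2 : ℝ) = 1 + 1 / 2 by norm_num]
    push_cast
    rw [Real.rpow_add hn, Real.rpow_one, Real.sqrt_eq_rpow]
  refine summable_of_sum_le (fun S => ?_) (c := ∑' n : ℕ, (12 * C ^ 2 * 4) * (1 / (((n:ℝ) + 1) * √((n:ℝ) + 1)))) ?_
  · have := h0 S; positivity
  · intro s
    refine sum_le_of_fibers s (fun S => ⌈lam ℓ S⌉₊) _ _ (fun n => by positivity) hsum fun n => ?_
    have hn : (0:ℝ) < (n:ℝ) + 1 := by positivity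
    have h1 := sum_le_mul_cnt (ℓ := ℓ) (G := s.biUnion id) (u := (n:ℝ) - 1) (δ := 1)
      (b := Real.exp (-((n:ℝ) - 1)) * (4 * (1 / (((n:ℝ) + 1) * √((n:ℝ) + 1)))))
      (s.filter fun S => ⌈lam ℓ S⌉₊ = n)
      (fun S => Real.exp (-lam ℓ S) / ((1 + lam ℓ S) * √(1 + lam ℓ S))) (by positivity) ?_
    · refine h1.trans ((mul_le_mul_of_nonneg_left (cnt_one_le R _ _) (by positivity)).trans
        (le_of_eq ?_))
      have h4 : Real.exp (-((n:ℝ) - 1)) * Real.exp ((n:ℝ) - 1) = 1 := by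
        rw [← Real.exp_add]; simp
      linear_combination (4 * (1 / (((n:ℝ) + 1) * √((n:ℝ) + 1)))) * (12 * C ^ 2) * h4
    · intro S hS
      obtain ⟨hS, hn'⟩ := Finset.mem_filter.mp hS
      have ha := Nat.le_ceil (lam ℓ S)
      have hb := Nat.ceil_lt_add_one (h0 S)
      rw [hn'] at ha hb
      refine ⟨Finset.subset_biUnion_of_mem id hS, by linarith, by linarith, ?_⟩
      rw [div_eq_mul_one_div]
      have hl := h0 S
      refine mul_le_mul (Real.exp_le_exp.mpr (by linarith)) ?_ (by positivity) (Real.exp_pos _).le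
      have a1 : √((n:ℝ) + 1) ≤ 2 * √(1 + lam ℓ S) := by
        rw [Real.sqrt_le_left (by positivity), mul_pow, Real.sq_sqrt (by linarith)]; linarith
      have a2 : ((n:ℝ) + 1) * √((n:ℝ) + 1) ≤ (2 * (1 + lam ℓ S)) * (2 * √(1 + lam ℓ S)) := by
        gcongr; linarith
      rw [mul_one_div, div_le_div_iff₀ (by positivity) (by positivity)]
      linarith

/-! ### A mean value inequality for generalized Dirichlet polynomials -/

lemma summable_kernel : Summable (fun m : ℤ => 8 / (1 + (m:ℝ) ^ 2)) := by
  have hn : Summable (fun n : ℕ => 8 / (1 + (n:ℝ) ^ 2)) := by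
    have h := ((summable_nat_add_iff 1).mpr
      (Real.summable_one_div_nat_pow.mpr (by norm_num : 1 < 2))).mul_left 16
    refine Summable.of_nonneg_of_le (fun n => by positivity) (fun n => ?_) h
    push_cast
    rw [mul_one_div, div_le_div_iff₀ (by positivity) (by positivity)]
    nlinarith [sq_nonneg ((n:ℝ) - 1)]
  refine summable_int_iff_summable_nat_and_neg.mpr ⟨by simpa using hn, by simpa using hn⟩

/-- Schur test for a convolution kernel on the integers, after grouping the indices by `k`. -/
lemma schur_bins {ι : Type*} (s : Finset ι) (k : ι → ℤ) (b : ι → ℝ) (hb : ∀ i, 0 ≤ b i)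
    (h : ℤ → ℝ) (h0 : ∀ m, 0 ≤ h m) (hev : ∀ m, h (-m) = h m) (hs : Summable h) :
    ∑ i ∈ s, ∑ j ∈ s, b i * b j * h (k i - k j) ≤
      (∑' m, h m) * ∑ i ∈ s, b i * ∑ j ∈ s with k j = k i, b j := by
  classical
  set K := s.image k
  set A : ℤ → ℝ := fun m => ∑ j ∈ s with k j = m, b j with hA
  have hA0 : ∀ m, 0 ≤ A m := fun m => Finset.sum_nonneg fun j _ => hb j
  have hm : ∀ i ∈ s, k i ∈ K := fun i hi => Finset.mem_image_of_mem k hi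
  have e1 : ∀ f : ℤ → ℝ, ∑ i ∈ s, b i * f (k i) = ∑ m ∈ K, A m * f m := by
    intro f
    rw [← Finset.sum_fiberwise_of_maps_to hm]
    refine Finset.sum_congr rfl fun m _ => ?_
    rw [hA, Finset.sum_mul]
    refine Finset.sum_congr rfl fun j hj => ?_
    rw [(Finset.mem_filter.mp hj).2]
  have hrow : ∀ m, ∑ n ∈ K, h (m - n) ≤ ∑' m, h m := by
    intro m
    have := hs.sum_le_tsum (K.image fun n => m - n) (fun n _ => h0 n)
    rwa [Finset.sum_image (fun x _ y _ hxy => by simpa using hxy)] at this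
  calc ∑ i ∈ s, ∑ j ∈ s, b i * b j * h (k i - k j)
      = ∑ i ∈ s, b i * ∑ n ∈ K, A n * h (k i - n) := by
        refine Finset.sum_congr rfl fun i _ => ?_
        rw [← e1 (fun n => h (k i - n)), Finset.mul_sum]
        exact Finset.sum_congr rfl fun j _ => by ring
    _ = ∑ m ∈ K, A m * ∑ n ∈ K, A n * h (m - n) := e1 (fun m => ∑ n ∈ K, A n * h (m - n))
    _ = ∑ m ∈ K, ∑ n ∈ K, A m * A n * h (m - n) := by
        refine Finset.sum_congr rfl fun m _ => ?_
        rw [Finset.mul_sum]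
        exact Finset.sum_congr rfl fun j _ => by ring
    _ ≤ ∑ m ∈ K, ∑ n ∈ K, (A m ^ 2 / 2 * h (m - n) + A n ^ 2 / 2 * h (n - m)) := by
        refine Finset.sum_le_sum fun m _ => Finset.sum_le_sum fun n _ => ?_
        have : h (n - m) = h (m - n) := by rw [← hev]; congr 1; ring
        rw [this, ← add_mul]
        refine mul_le_mul_of_nonneg_right ?_ (h0 _)
        nlinarith [sq_nonneg (A m - A n)]
    _ = ∑ m ∈ K, A m ^ 2 * ∑ n ∈ K, h (m - n) := by
        simp_rw [Finset.sum_add_distrib]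
        rw [Finset.sum_comm (f := fun m n => A n ^ 2 / 2 * h (n - m)), ← Finset.sum_add_distrib]
        refine Finset.sum_congr rfl fun m _ => ?_
        rw [← Finset.mul_sum]; ring
    _ ≤ ∑ m ∈ K, A m ^ 2 * ∑' m, h m :=
        Finset.sum_le_sum fun m _ => mul_le_mul_of_nonneg_left (hrow m) (sq_nonneg _)
    _ = (∑' m, h m) * ∑ m ∈ K, A m * A m := by
        rw [← Finset.sum_mul, mul_comm]; congr 1
        exact Finset.sum_congr rfl fun m _ => by ring
    _ = _ := by rw [← e1 A]

lemma gauss_int (T x : ℝ) (hT : 0 < T) :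
    MeasureTheory.Integrable (fun t : ℝ => Complex.exp (Complex.I * x * t) *
      Complex.exp (-((1 / T ^ 2 : ℝ) : ℂ) * t ^ 2)) ∧
    ‖∫ t : ℝ, Complex.exp (Complex.I * x * t) * Complex.exp (-((1 / T ^ 2 : ℝ) : ℂ) * t ^ 2)‖ ≤
      2 * T * Real.exp (-(T * x) ^ 2 / 4) := by
  have hb : 0 < 1 / T ^ 2 := by positivity
  constructor
  · have h := integrable_cexp_neg_mul_sq (b := ((1 / T ^ 2 : ℝ) : ℂ)) (by rwa [Complex.ofReal_re])
    refine h.bdd_mul (c := 1) (by fun_prop) (Eventually.of_forall fun t => ?_)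
    rw [Complex.norm_exp]; simp
  · rw [fourierIntegral_gaussian (by rwa [Complex.ofReal_re]), norm_mul]
    refine mul_le_mul ?_ ?_ (norm_nonneg _) (by positivity)
    · have e : ((Real.pi : ℂ) / ((1 / T ^ 2 : ℝ) : ℂ)) = ((Real.pi * T ^ 2 : ℝ) : ℂ) := by
        push_cast; field_simp
      rw [e, Complex.norm_cpow_eq_rpow_re_of_pos (by positivity)]
      have : ((1 / 2 : ℂ)).re = 1 / 2 := by norm_num
      rw [this, ← Real.sqrt_eq_rpow, Real.sqrt_le_left (by positivity)]
      nlinarith [Real.pi_lt_four, sq_nonneg T]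
    · rw [Complex.norm_exp]
      apply Real.exp_le_exp.mpr
      have e : (-(x:ℂ) ^ 2 / (4 * ((1 / T ^ 2 : ℝ) : ℂ))) = ((-(T * x) ^ 2 / 4 : ℝ) : ℂ) := by
        push_cast; field_simp
      rw [e, Complex.ofReal_re]

/-- Large-sieve type inequality without any spacing hypothesis on the frequencies `l i`: the mean
square over `[1, T]` is controlled by the pairs of frequencies in a common window of length
`1 / T`. A Gaussian majorant turns the mean square into a rapidly decaying kernel in
`T * (l i - l j)`, to which the Schur test applies. -/
lemma mean_sq_le : ∃ K : ℝ, 0 < K ∧ ∀ {ι : Type} (s : Finset ι) (a : ι → ℂ) (l : ι → ℝ) (T : ℝ),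
    1 ≤ T → ∫ t in (1:ℝ)..T, ‖∑ i ∈ s, a i * Complex.exp (-(Complex.I * l i * t))‖ ^ 2 ≤
      K * T * ∑ i ∈ s, ‖a i‖ * ∑ j ∈ s with ⌈T * l j⌉ = ⌈T * l i⌉, ‖a j‖ := by
  have hH : 0 ≤ ∑' m : ℤ, 8 / (1 + (m:ℝ) ^ 2) := tsum_nonneg fun m => by positivity
  refine ⟨6 * (1 + ∑' m : ℤ, 8 / (1 + (m:ℝ) ^ 2)), by positivity, fun s a l T hT => ?_⟩
  have hT0 : 0 < T := by linarith
  set F : ℝ → ℂ := fun t => ∑ i ∈ s, a i * Complex.exp (-(Complex.I * l i * t)) with hF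
  set w : ℝ → ℂ := fun t => Complex.exp (-((1 / T ^ 2 : ℝ) : ℂ) * t ^ 2) with hw
  have hFc : Continuous F := by rw [hF]; fun_prop
  have hwr : ∀ t, w t = ((Real.exp (-(1 / T ^ 2) * t ^ 2) : ℝ) : ℂ) := by
    intro t; rw [hw]; push_cast; rfl
  have hexp : ∀ t, ((‖F t‖ ^ 2 : ℝ) : ℂ) * w t = ∑ i ∈ s, ∑ j ∈ s,
      a i * (starRingEnd ℂ) (a j) * (Complex.exp (Complex.I * ((l j - l i : ℝ) : ℂ) * t) * w t) := by
    intro t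
    rw [← Complex.normSq_eq_norm_sq, ← Complex.mul_conj, hF]
    simp only [map_sum, map_mul]
    rw [Finset.sum_mul_sum, Finset.sum_mul]
    refine Finset.sum_congr rfl fun i _ => ?_
    rw [Finset.sum_mul]
    refine Finset.sum_congr rfl fun j _ => ?_
    rw [← Complex.exp_conj]
    have : Complex.exp (Complex.I * ((l j - l i : ℝ) : ℂ) * t) =
        Complex.exp (-(Complex.I * l i * t)) *
          Complex.exp ((starRingEnd ℂ) (-(Complex.I * l j * t))) := by
      rw [← Complex.exp_add]; congr 1
      simp only [map_neg, map_mul, Complex.conj_I, Complex.conj_ofReal]; push_cast; ring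
    rw [this]; ring
  have hintg : MeasureTheory.Integrable (fun t => ((‖F t‖ ^ 2 : ℝ) : ℂ) * w t) := by
    simp_rw [hexp]
    refine MeasureTheory.integrable_finsetSum _ fun i _ =>
      MeasureTheory.integrable_finsetSum _ fun j _ => ?_
    exact (gauss_int T _ hT0).1.const_mul _
  have hbound : ‖∫ t, ((‖F t‖ ^ 2 : ℝ) : ℂ) * w t‖ ≤
      ∑ i ∈ s, ∑ j ∈ s, (2 * T) * (‖a i‖ * ‖a j‖ * (8 / (1 + ((⌈T * l i⌉ - ⌈T * l j⌉ : ℤ) : ℝ) ^ 2))) := by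
    simp_rw [hexp]
    rw [MeasureTheory.integral_finsetSum _ fun i _ =>
      MeasureTheory.integrable_finsetSum _ fun j _ => (gauss_int T _ hT0).1.const_mul _]
    refine (norm_sum_le _ _).trans (Finset.sum_le_sum fun i _ => ?_)
    rw [MeasureTheory.integral_finsetSum _ fun j _ => (gauss_int T _ hT0).1.const_mul _]
    refine (norm_sum_le _ _).trans (Finset.sum_le_sum fun j _ => ?_)
    rw [MeasureTheory.integral_const_mul, norm_mul, norm_mul, RCLike.norm_conj]
    have h1 := (gauss_int T (l j - l i) hT0).2
    have h2 : Real.exp (-(T * (l j - l i)) ^ 2 / 4) ≤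
        8 / (1 + ((⌈T * l i⌉ - ⌈T * l j⌉ : ℤ) : ℝ) ^ 2) := by
      set x := T * (l j - l i) with hx
      have e1 := Int.le_ceil (T * l i)
      have e2 := Int.ceil_lt_add_one (T * l i)
      have e3 := Int.le_ceil (T * l j)
      have e4 := Int.ceil_lt_add_one (T * l j)
      have hsq : ((⌈T * l i⌉ - ⌈T * l j⌉ : ℤ) : ℝ) ^ 2 ≤ (|x| + 1) ^ 2 := by
        rw [sq_le_sq, abs_of_nonneg (by positivity : 0 ≤ |x| + 1), abs_le]
        push_cast
        have := abs_le.mp (le_refl |x|)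
        have hx' : x = T * l j - T * l i := by rw [hx]; ring
        constructor <;> linarith [this.1, this.2]
      have hx2 : (|x| + 1) ^ 2 ≤ 2 * x ^ 2 + 2 := by
        nlinarith [sq_abs x, sq_nonneg (|x| - 1)]
      have h4 := Real.add_one_le_exp (x ^ 2 / 4)
      rw [neg_div, Real.exp_neg, ← one_div, div_le_div_iff₀ (Real.exp_pos _) (by positivity)]
      nlinarith
    calc _ ≤ ‖a i‖ * ‖a j‖ * (2 * T * (8 / (1 + ((⌈T * l i⌉ - ⌈T * l j⌉ : ℤ) : ℝ) ^ 2))) := by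
          refine mul_le_mul_of_nonneg_left (h1.trans ?_) (by positivity)
          exact mul_le_mul_of_nonneg_left h2 (by positivity)
      _ = _ := by ring
  have hreal : ∫ t, ((‖F t‖ ^ 2 : ℝ) : ℂ) * w t =
      ((∫ t, ‖F t‖ ^ 2 * Real.exp (-(1 / T ^ 2) * t ^ 2) : ℝ) : ℂ) := by
    rw [← integral_complex_ofReal]
    congr 1; ext t; rw [hwr]; push_cast; rfl
  have hintr : MeasureTheory.Integrable (fun t => ‖F t‖ ^ 2 * Real.exp (-(1 / T ^ 2) * t ^ 2)) := by
    have := hintg.re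
    refine this.congr (Eventually.of_forall fun t => ?_)
    simp only [hwr]
    rw [← Complex.ofReal_mul]; exact Complex.ofReal_re _
  have hlow : ∫ t in (1:ℝ)..T, ‖F t‖ ^ 2 ≤
      3 * ∫ t, ‖F t‖ ^ 2 * Real.exp (-(1 / T ^ 2) * t ^ 2) := by
    rw [← MeasureTheory.integral_const_mul, intervalIntegral.integral_of_le hT]
    refine le_trans (MeasureTheory.setIntegral_mono_on
      (g := fun t => 3 * (‖F t‖ ^ 2 * Real.exp (-(1 / T ^ 2) * t ^ 2))) ?_ ?_ measurableSet_Ioc ?_)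
      (MeasureTheory.setIntegral_le_integral (hintr.const_mul 3)
        (Eventually.of_forall fun t => by positivity))
    · exact ((hFc.norm.pow 2).integrableOn_Icc).mono_set Set.Ioc_subset_Icc_self
    · exact (hintr.const_mul 3).integrableOn
    · intro t ht
      have h1 : (1:ℝ) ≤ 3 * Real.exp (-(1 / T ^ 2) * t ^ 2) := by
        have : Real.exp (-1) ≤ Real.exp (-(1 / T ^ 2) * t ^ 2) := by
          apply Real.exp_le_exp.mpr
          have : t ^ 2 ≤ T ^ 2 := by nlinarith [ht.1, ht.2]
          have : 1 / T ^ 2 * t ^ 2 ≤ 1 := by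
            rw [one_div, inv_mul_le_iff₀ (by positivity)]; linarith
          linarith
        have := Real.exp_neg_one_gt_d9
        linarith
      have : 0 ≤ ‖F t‖ ^ 2 := by positivity
      nlinarith
  rw [hreal, Complex.norm_real, Real.norm_eq_abs] at hbound
  have hS := schur_bins s (fun i => ⌈T * l i⌉) (fun i => ‖a i‖) (fun i => norm_nonneg _)
    (fun m : ℤ => 8 / (1 + (m:ℝ) ^ 2)) (fun m => by positivity) (fun m => by simp) summable_kernel
  simp_rw [← Finset.mul_sum] at hbound
  set W := ∑ i ∈ s, ‖a i‖ * ∑ j ∈ s with ⌈T * l j⌉ = ⌈T * l i⌉, ‖a j‖ with hW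
  have hW0 : 0 ≤ W := Finset.sum_nonneg fun i _ =>
    mul_nonneg (norm_nonneg _) (Finset.sum_nonneg fun j _ => norm_nonneg _)
  set H := ∑' m : ℤ, 8 / (1 + (m:ℝ) ^ 2)
  calc _ ≤ 3 * (2 * T * (H * W)) := by
        refine hlow.trans ?_
        have := (le_abs_self _).trans hbound
        have h3 := mul_le_mul_of_nonneg_left hS (show 0 ≤ 2 * T by positivity)
        linarith
    _ ≤ _ := by
      have : 0 ≤ T * W := by positivity
      nlinarith

/-! ### Sums over Beurling primes by partial summation -/

lemma finite_le {p : ℕ → ℝ} (hpt : Tendsto p atTop atTop) (X : ℝ) :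
    ∃ G : Finset ℕ, ∀ j, j ∈ G ↔ p j ≤ X := by
  have h : {j | p j ≤ X}.Finite := by
    have := hpt.eventually (eventually_gt_atTop X)
    rw [← Nat.cofinite_eq_atTop, eventually_cofinite] at this
    simpa using this
  exact ⟨h.toFinset, fun j => by simp⟩

lemma finite_Ioc {p : ℕ → ℝ} (hpt : Tendsto p atTop atTop) (X Y : ℝ) :
    ∃ G : Finset ℕ, ∀ j, j ∈ G ↔ X < p j ∧ p j ≤ Y := by
  obtain ⟨G, hG⟩ := finite_le hpt Y
  exact ⟨G.filter fun j => X < p j, fun j => by simp [hG, and_comm]⟩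

/-- The Beurling prime counting function. -/
noncomputable def pin (p : ℕ → ℝ) (x : ℝ) : ℝ := ∑' j, if p j ≤ x then (1:ℝ) else 0

lemma pin_eq {p : ℕ → ℝ} {x : ℝ} (G : Finset ℕ) (hG : ∀ j, p j ≤ x → j ∈ G) :
    pin p x = ∑ j ∈ G, if p j ≤ x then (1:ℝ) else 0 :=
  tsum_eq_sum fun j hj => if_neg fun h => hj (hG j h)

lemma pin_sub {p : ℕ → ℝ} (hpt : Tendsto p atTop atTop) {X Y x : ℝ} (hX : X ≤ x) (hY : x ≤ Y)
    {G : Finset ℕ} (hG : ∀ j, j ∈ G ↔ X < p j ∧ p j ≤ Y) :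
    ∑ j ∈ G, (if p j ≤ x then (1:ℝ) else 0) = pin p x - pin p X := by
  obtain ⟨H, hH⟩ := finite_le hpt Y
  rw [pin_eq H fun j h => (hH j).mpr (h.trans hY),
    pin_eq H fun j h => (hH j).mpr (h.trans (hX.trans hY)), ← Finset.sum_sub_distrib]
  have : G = H.filter fun j => X < p j := by
    ext j; simp [hG, hH, and_comm]
  rw [this, Finset.sum_filter]
  refine Finset.sum_congr rfl fun j _ => ?_
  by_cases h1 : X < p j <;> by_cases h2 : p j ≤ x
  · simp [h1, h2, not_le.mpr h1]
  · simp [h1, h2, not_le.mpr h1]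
  · simp [h1, h2, not_lt.mp h1]
  · exact absurd ((not_lt.mp h1).trans hX) h2

lemma log_ne {x : ℝ} (h : 1 < x) : Real.log x ≠ 0 := (Real.log_pos h).ne'

lemma contOn_invlog {a b : ℝ} (ha : 1 < a) : ContinuousOn (fun t : ℝ => 1 / Real.log t) (Set.Icc a b) := by
  refine ContinuousOn.div continuousOn_const (Real.continuousOn_log.mono ?_) ?_
  · intro x hx; simp; linarith [hx.1]
  · intro x hx; exact log_ne (by linarith [hx.1])

lemma integrable_invlog {a b : ℝ} (ha : 1 < a) (hab : a ≤ b) :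
    IntervalIntegrable (fun t : ℝ => 1 / Real.log t) MeasureTheory.volume a b :=
  (by rw [Set.uIcc_of_le hab]; exact contOn_invlog ha : ContinuousOn _ (Set.uIcc a b)).intervalIntegrable

/-- A quantitative form of the hypothesis on the prime counting function. -/
def PiBound (p : ℕ → ℝ) (α K X₀ : ℝ) : Prop :=
  0 < K ∧ 3 ≤ X₀ ∧ ∀ x, X₀ ≤ x → |pin p x - ∫ t in (2:ℝ)..x, 1 / Real.log t| ≤ K * x ^ α

lemma exists_piBound {p : ℕ → ℝ} {α : ℝ}
    (hπ : (fun x : ℝ => (∑' j, if p j ≤ x then (1:ℝ) else 0)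
        - ∫ t in (2:ℝ)..x, 1 / Real.log t) =O[atTop] (fun x : ℝ => x ^ α)) :
    ∃ K X₀, PiBound p α K X₀ := by
  obtain ⟨K, hK, h⟩ := hπ.exists_pos
  obtain ⟨X, hX⟩ := eventually_atTop.mp (isBigOWith_iff.mp h)
  refine ⟨K, max X 3, hK, le_max_right _ _, fun x hx => ?_⟩
  have h1 := hX x ((le_max_left _ _).trans hx)
  have h2 : 0 ≤ x := by linarith [(le_max_right X 3).trans hx]
  rwa [Real.norm_eq_abs, Real.norm_eq_abs, abs_of_nonneg (Real.rpow_nonneg h2 _)] at h1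

/-- Increments of the prime counting function against the logarithmic integral. -/
lemma pin_incr {p : ℕ → ℝ} {α K X₀ X x : ℝ} (hα : 0 < α) (h : PiBound p α K X₀) (hX : X₀ ≤ X)
    (hx : X ≤ x) :
    |pin p x - pin p X - ∫ t in X..x, 1 / Real.log t| ≤ 2 * K * x ^ α := by
  obtain ⟨hK, h3, hb⟩ := h
  have h1 := hb x (hX.trans hx)
  have h2 := hb X hX
  have h4 : X ^ α ≤ x ^ α := Real.rpow_le_rpow (by linarith) hx hα.le
  have h5 := intervalIntegral.integral_add_adjacent_intervals
    (integrable_invlog (a := 2) (b := X) (by norm_num) (by linarith))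
    (integrable_invlog (a := X) (b := x) (by linarith) hx)
  have h6 : K * X ^ α ≤ K * x ^ α := mul_le_mul_of_nonneg_left h4 hK.le
  rw [abs_le] at *
  constructor <;> linarith [h1.1, h1.2, h2.1, h2.2]

lemma hasDerivAt_cpow {s : ℂ} {x : ℝ} (hx : 0 < x) :
    HasDerivAt (fun y : ℝ => (y:ℂ) ^ (-s)) (-s * (x:ℂ) ^ (-s - 1)) x := by
  rcases eq_or_ne s 0 with rfl | hs
  · simpa using hasDerivAt_const x (1:ℂ)
  · exact hasDerivAt_ofReal_cpow_const hx.ne' (neg_ne_zero.mpr hs)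

lemma contOn_cpow (s : ℂ) {a b : ℝ} (ha : 0 < a) :
    ContinuousOn (fun y : ℝ => (y:ℂ) ^ s) (Set.Icc a b) := by
  intro x hx
  have : 0 < x := lt_of_lt_of_le ha hx.1
  exact (Complex.continuousAt_ofReal_cpow_const x s (Or.inr this.ne')).continuousWithinAt

/-- Partial summation: sums of `p ^ (-s)` over Beurling primes in `(X, Y]` are close to the
corresponding integrals against `dx / log x`. -/
lemma sum_cpow_sub_integral {p : ℕ → ℝ} {α K X₀ X Y : ℝ} (hpt : Tendsto p atTop atTop)
    (hα : 0 < α) (hα1 : α < 1) (h : PiBound p α K X₀) (hX : X₀ ≤ X) (hXY : X ≤ Y)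
    {G : Finset ℕ} (hG : ∀ j, j ∈ G ↔ X < p j ∧ p j ≤ Y) {s : ℂ} (hs : 1 ≤ s.re) :
    ‖∑ j ∈ G, (p j : ℂ) ^ (-s) - ∫ x in X..Y, (x:ℂ) ^ (-s) * ((1 / Real.log x : ℝ) : ℂ)‖ ≤
      2 * K * (1 + ‖s‖ / (1 - α)) * X ^ (α - 1) := by
  have hK := h.1
  have hX3 : 3 ≤ X := h.2.1.trans hX
  have hX0 : 0 < X := by linarith
  have hY0 : 0 < Y := by linarith
  set f : ℝ → ℂ := fun x => (x:ℂ) ^ (-s) with hf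
  set f' : ℝ → ℂ := fun x => -s * (x:ℂ) ^ (-s - 1) with hf'
  set q : ℝ → ℝ := fun x => ∑ j ∈ G, (if p j ≤ x then (1:ℝ) else 0) with hq
  set L : ℝ → ℝ := fun x => ∫ t in X..x, 1 / Real.log t with hL
  have hf'c : ContinuousOn f' (Set.Icc X Y) := (contOn_cpow _ hX0).const_smul (-s)
  have hf'i : ∀ a b, X ≤ a → a ≤ b → b ≤ Y → IntervalIntegrable f' MeasureTheory.volume a b := by
    intro a b h1 h2 h3
    apply ContinuousOn.intervalIntegrable
    rw [Set.uIcc_of_le h2]; exact hf'c.mono (Set.Icc_subset_Icc h1 h3)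
  have hftc : ∀ a, X ≤ a → a ≤ Y → ∫ x in a..Y, f' x = f Y - f a := by
    intro a h1 h2
    refine intervalIntegral.integral_eq_sub_of_hasDerivAt (fun x hx => ?_) (hf'i a Y h1 h2 le_rfl)
    rw [Set.uIcc_of_le h2] at hx
    exact hasDerivAt_cpow (by linarith [hx.1])
  -- each prime contributes `f p = f Y - ∫ f'` over `[p, Y]`
  have hind : ∀ a, X < a → a ≤ Y →
      IntervalIntegrable (fun x => f' x * ((if a ≤ x then (1:ℝ) else 0 : ℝ) : ℂ))
        MeasureTheory.volume X Y ∧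
      ∫ x in X..Y, f' x * ((if a ≤ x then (1:ℝ) else 0 : ℝ) : ℂ) = f Y - f a := by
    intro a h1 h2
    have e : (fun x => f' x * ((if a ≤ x then (1:ℝ) else 0 : ℝ) : ℂ)) =
        Set.indicator (Set.Ici a) f' := by
      ext x
      by_cases hx : a ≤ x <;> simp [Set.indicator, hx]
    rw [e]
    constructor
    · rw [intervalIntegrable_iff_integrableOn_Ioc_of_le hXY]
      exact ((intervalIntegrable_iff_integrableOn_Ioc_of_le hXY).mp
        (hf'i X Y le_rfl hXY le_rfl)).indicator measurableSet_Ici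
    · rw [intervalIntegral.integral_of_le hXY, MeasureTheory.setIntegral_indicator measurableSet_Ici,
        ← hftc a h1.le h2, intervalIntegral.integral_of_le h2, ← MeasureTheory.integral_Icc_eq_integral_Ioc]
      congr 2
      ext x
      simp only [Set.mem_inter_iff, Set.mem_Ioc, Set.mem_Ici, Set.mem_Icc]
      exact ⟨fun hx => ⟨hx.2, hx.1.2⟩, fun hx => ⟨⟨by linarith [hx.1], hx.2⟩, hx.1⟩⟩
  have hfq : ∀ x, f' x * (q x : ℂ) = ∑ j ∈ G, f' x * ((if p j ≤ x then (1:ℝ) else 0 : ℝ) : ℂ) := by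
    intro x; rw [← Finset.mul_sum, hq]; push_cast; rfl
  have hqi : IntervalIntegrable (fun x => f' x * (q x : ℂ)) MeasureTheory.volume X Y := by
    simp_rw [hfq]
    have := IntervalIntegrable.sum G fun j hj => (hind _ ((hG j).mp hj).1 ((hG j).mp hj).2).1
    simpa only [Finset.sum_fn] using this
  have hqY : (q Y : ℂ) = (G.card : ℂ) := by
    rw [hq]
    simp only
    rw [Finset.sum_congr rfl (fun j hj => if_pos ((hG j).mp hj).2)]; simp
  have hsum : ∑ j ∈ G, f (p j) = f Y * q Y - ∫ x in X..Y, f' x * (q x : ℂ) := by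
    simp_rw [hfq]
    rw [intervalIntegral.integral_finsetSum
      fun j hj => (hind _ ((hG j).mp hj).1 ((hG j).mp hj).2).1,
      Finset.sum_congr rfl fun j hj => (hind _ ((hG j).mp hj).1 ((hG j).mp hj).2).2,
      Finset.sum_sub_distrib, hqY]
    simp [mul_comm]
  have hLd : ∀ x ∈ Set.uIcc X Y, HasDerivAt (fun y => (L y : ℂ)) ((1 / Real.log x : ℝ) : ℂ) x := by
    intro x hx
    rw [Set.uIcc_of_le hXY] at hx
    apply HasDerivAt.ofReal_comp
    have hc : ContinuousAt (fun t : ℝ => 1 / Real.log t) x := by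
      refine ContinuousAt.div continuousAt_const (Real.continuousAt_log (by linarith [hx.1]))
        (log_ne (by linarith [hx.1]))
    refine intervalIntegral.integral_hasDerivAt_right (integrable_invlog (by linarith) hx.1) ?_ hc
    exact (Measurable.stronglyMeasurable (by fun_prop)).stronglyMeasurableAtFilter
  have hLc : ContinuousOn (fun y => (L y : ℂ)) (Set.uIcc X Y) :=
    fun x hx => (hLd x hx).continuousAt.continuousWithinAt
  have hparts : ∫ x in X..Y, f x * ((1 / Real.log x : ℝ) : ℂ) =
      f Y * (L Y : ℂ) - ∫ x in X..Y, f' x * (L x : ℂ) := by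
    have := intervalIntegral.integral_mul_deriv_eq_deriv_mul (a := X) (b := Y) (u := f) (u' := f')
      (v := fun y => (L y : ℂ)) (v' := fun x => ((1 / Real.log x : ℝ) : ℂ)) ?_ hLd
      (hf'i X Y le_rfl hXY le_rfl) ?_
    · rw [this]; simp [hL]
    · intro x hx
      rw [Set.uIcc_of_le hXY] at hx
      exact hasDerivAt_cpow (by linarith [hx.1])
    · exact ⟨(integrable_invlog (by linarith) hXY).1.ofReal, (integrable_invlog (by linarith) hXY).2.ofReal⟩
  have hLi : IntervalIntegrable (fun x => f' x * (L x : ℂ)) MeasureTheory.volume X Y := by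
    apply ContinuousOn.intervalIntegrable
    refine ContinuousOn.mul ?_ hLc
    rwa [Set.uIcc_of_le hXY]
  have hD : ∀ x ∈ Set.Icc X Y, ‖((q x : ℂ) - (L x : ℂ))‖ ≤ 2 * K * x ^ α := by
    intro x hx
    have h1 := pin_incr hα h hX hx.1
    rw [← pin_sub hpt hx.1 hx.2 hG] at h1
    rw [← Complex.ofReal_sub, Complex.norm_real]
    exact h1
  rw [hparts, hsum]
  have e : f Y * (q Y : ℂ) - (∫ x in X..Y, f' x * (q x : ℂ)) -
      (f Y * (L Y : ℂ) - ∫ x in X..Y, f' x * (L x : ℂ)) =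
      f Y * ((q Y : ℂ) - L Y) - ∫ x in X..Y, f' x * ((q x : ℂ) - L x) := by
    have : ∫ x in X..Y, f' x * ((q x : ℂ) - L x) =
        (∫ x in X..Y, f' x * (q x : ℂ)) - ∫ x in X..Y, f' x * (L x : ℂ) := by
      rw [← intervalIntegral.integral_sub hqi hLi]
      congr 1; ext x; ring
    rw [this]; ring
  rw [e]
  have hα1' : 0 < 1 - α := by linarith
  have hb1 : ‖f Y * ((q Y : ℂ) - L Y)‖ ≤ 2 * K * Y ^ (α - 1) := by
    rw [norm_mul, hf]
    simp only
    rw [Complex.norm_cpow_eq_rpow_re_of_pos hY0]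
    have h1 : Y ^ (-s).re ≤ Y ^ (-1:ℝ) :=
      Real.rpow_le_rpow_of_exponent_le (by linarith) (by simp; linarith)
    calc _ ≤ Y ^ (-1:ℝ) * (2 * K * Y ^ α) := by
          gcongr; exact hD Y ⟨hXY, le_rfl⟩
      _ = 2 * K * (Y ^ α * Y ^ (-1:ℝ)) := by ring
      _ = _ := by rw [← Real.rpow_add hY0]; rfl
  have hb2 : ‖∫ x in X..Y, f' x * ((q x : ℂ) - L x)‖ ≤
      ∫ x in X..Y, (2 * K * ‖s‖) * x ^ (α - 2) := by
    refine intervalIntegral.norm_integral_le_of_norm_le hXY (Eventually.of_forall fun x hx => ?_) ?_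
    · have hx0 : 0 < x := by linarith [hx.1]
      rw [norm_mul, hf']
      simp only
      rw [norm_mul, norm_neg, Complex.norm_cpow_eq_rpow_re_of_pos hx0]
      have h1 : x ^ (-s - 1).re ≤ x ^ (-2:ℝ) :=
        Real.rpow_le_rpow_of_exponent_le (by linarith [hx.1]) (by simp; linarith)
      calc _ ≤ ‖s‖ * x ^ (-2:ℝ) * (2 * K * x ^ α) := by
            gcongr; exact hD x ⟨hx.1.le, hx.2⟩
        _ = 2 * K * ‖s‖ * (x ^ α * x ^ (-2:ℝ)) := by ring
        _ = _ := by rw [← Real.rpow_add hx0]; rfl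
    · apply ContinuousOn.intervalIntegrable
      rw [Set.uIcc_of_le hXY]
      refine continuousOn_const.mul (continuousOn_id.rpow_const fun x hx => Or.inl ?_)
      simp only [id]; linarith [hx.1]
  rw [intervalIntegral.integral_const_mul, integral_rpow (Or.inr ⟨by linarith, by
    rw [Set.uIcc_of_le hXY]; intro h0; linarith [h0.1]⟩)] at hb2
  have hexp : α - 2 + 1 = α - 1 := by ring
  rw [hexp] at hb2
  have hYX : Y ^ (α - 1) ≤ X ^ (α - 1) := Real.rpow_le_rpow_of_nonpos hX0 hXY (by linarith)
  have hYp : 0 ≤ Y ^ (α - 1) := by positivity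
  have h3 : (Y ^ (α - 1) - X ^ (α - 1)) / (α - 1) ≤ X ^ (α - 1) / (1 - α) := by
    rw [← neg_div_neg_eq, neg_sub, neg_sub]
    gcongr; linarith
  refine (norm_sub_le _ _).trans ((add_le_add hb1 hb2).trans ?_)
  calc _ ≤ 2 * K * X ^ (α - 1) + 2 * K * ‖s‖ * (X ^ (α - 1) / (1 - α)) := by gcongr
    _ = _ := by ring

/-- Oscillation of `x ^ (-s) / log x` away from `s = 1`. -/
lemma norm_integral_cpow_div_log_le {X Y : ℝ} (hX : 3 ≤ X) (hXY : X ≤ Y) {s : ℂ} (hs : 1 ≤ s.re)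
    (hs1 : s ≠ 1) :
    ‖∫ x in X..Y, (x:ℂ) ^ (-s) * ((1 / Real.log x : ℝ) : ℂ)‖ ≤ 2 / (‖s - 1‖ * Real.log X) := by
  have hs0 : s - 1 ≠ 0 := sub_ne_zero.mpr hs1
  have hn : 0 < ‖s - 1‖ := norm_pos_iff.mpr hs0
  have hlX : 0 < Real.log X := Real.log_pos (by linarith)
  have hlY : 0 < Real.log Y := Real.log_pos (by linarith)
  set v : ℝ → ℂ := fun x => (x:ℂ) ^ (-(s - 1)) / (-(s - 1)) with hv
  have hvd : ∀ x ∈ Set.uIcc X Y, HasDerivAt v ((x:ℂ) ^ (-s)) x := by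
    intro x hx
    rw [Set.uIcc_of_le hXY] at hx
    have := (hasDerivAt_cpow (s := s - 1) (x := x) (by linarith [hx.1])).div_const (-(s - 1))
    refine this.congr_deriv ?_
    rw [mul_div_cancel_left₀ _ (neg_ne_zero.mpr hs0)]
    congr 1; ring
  have hvn : ∀ x, X ≤ x → ‖v x‖ ≤ 1 / ‖s - 1‖ := by
    intro x hx
    rw [hv]; simp only
    rw [norm_div, norm_neg, Complex.norm_cpow_eq_rpow_re_of_pos (by linarith)]
    gcongr
    exact Real.rpow_le_one_of_one_le_of_nonpos (by linarith) (by simp; linarith)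
  have hud : ∀ x, X ≤ x → HasDerivAt (fun x => 1 / Real.log x) (-(1 / (x * Real.log x ^ 2))) x := by
    intro x hx
    have := (Real.hasDerivAt_log (show x ≠ 0 by linarith)).inv (log_ne (by linarith))
    simp_rw [one_div]
    refine this.congr_deriv ?_
    have := log_ne (show 1 < x by linarith)
    field_simp
  have hc : ContinuousOn (fun x : ℝ => 1 / (x * Real.log x ^ 2)) (Set.Icc X Y) := by
    refine ContinuousOn.div continuousOn_const (continuousOn_id.mul
      ((Real.continuousOn_log.mono ?_).pow 2)) ?_
    · intro x hx; simp; linarith [hx.1]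
    · intro x hx
      have := log_ne (show 1 < x by linarith [hx.1])
      have : x ≠ 0 := by linarith [hx.1]
      exact mul_ne_zero this (pow_ne_zero 2 ‹_›)
  have hu'i : IntervalIntegrable (fun x : ℝ => 1 / (x * Real.log x ^ 2)) MeasureTheory.volume X Y := by
    apply ContinuousOn.intervalIntegrable; rwa [Set.uIcc_of_le hXY]
  have hI : ∫ x in X..Y, 1 / (x * Real.log x ^ 2) = 1 / Real.log X - 1 / Real.log Y := by
    have := intervalIntegral.integral_eq_sub_of_hasDerivAt (a := X) (b := Y)
      (f := fun x => 1 / Real.log x) (f' := fun x => -(1 / (x * Real.log x ^ 2)))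
      (fun x hx => hud x (by rw [Set.uIcc_of_le hXY] at hx; exact hx.1)) hu'i.neg
    rw [intervalIntegral.integral_neg] at this
    linarith
  have hparts := intervalIntegral.integral_mul_deriv_eq_deriv_mul (a := X) (b := Y)
    (u := fun x => ((1 / Real.log x : ℝ) : ℂ)) (u' := fun x => ((-(1 / (x * Real.log x ^ 2)) : ℝ) : ℂ))
    (v := v) (v' := fun x => (x:ℂ) ^ (-s))
    (fun x hx => (hud x (by rw [Set.uIcc_of_le hXY] at hx; exact hx.1)).ofReal_comp) hvd
    ⟨hu'i.neg.1.ofReal, hu'i.neg.2.ofReal⟩ (by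
      apply ContinuousOn.intervalIntegrable
      rw [Set.uIcc_of_le hXY]; exact contOn_cpow _ (by linarith))
  have e : ∫ x in X..Y, (x:ℂ) ^ (-s) * ((1 / Real.log x : ℝ) : ℂ) =
      ∫ x in X..Y, ((1 / Real.log x : ℝ) : ℂ) * (x:ℂ) ^ (-s) := by
    congr 1; ext x; ring
  rw [e, hparts]
  have hb : ‖∫ x in X..Y, ((-(1 / (x * Real.log x ^ 2)) : ℝ) : ℂ) * v x‖ ≤
      ∫ x in X..Y, (1 / ‖s - 1‖) * (1 / (x * Real.log x ^ 2)) := by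
    refine intervalIntegral.norm_integral_le_of_norm_le hXY (Eventually.of_forall fun x hx => ?_)
      (hu'i.const_mul _)
    have hx0 : 0 < x := by linarith [hx.1]
    rw [norm_mul, Complex.norm_real, norm_neg, Real.norm_eq_abs, abs_of_nonneg (by positivity), mul_comm]
    gcongr
    exact hvn x hx.1.le
  rw [intervalIntegral.integral_const_mul, hI] at hb
  have hY : ‖((1 / Real.log Y : ℝ) : ℂ) * v Y‖ ≤ 1 / Real.log Y * (1 / ‖s - 1‖) := by
    rw [norm_mul, Complex.norm_real, Real.norm_eq_abs, abs_of_nonneg (by positivity)]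
    gcongr; exact hvn Y hXY
  have hX' : ‖((1 / Real.log X : ℝ) : ℂ) * v X‖ ≤ 1 / Real.log X * (1 / ‖s - 1‖) := by
    rw [norm_mul, Complex.norm_real, Real.norm_eq_abs, abs_of_nonneg (by positivity)]
    gcongr; exact hvn X le_rfl
  refine (norm_sub_le _ _).trans ((add_le_add ((norm_sub_le _ _).trans (add_le_add hY hX')) hb).trans
    (le_of_eq ?_))
  field_simp; ring

/-! ### Regularity of the Beurling primes -/

lemma integral_inv_mul_log {X Y : ℝ} (hX : 3 ≤ X) (hXY : X ≤ Y) :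
    ∫ x in X..Y, x⁻¹ * (1 / Real.log x) = Real.log (Real.log Y) - Real.log (Real.log X) := by
  refine intervalIntegral.integral_eq_sub_of_hasDerivAt (f := fun x => Real.log (Real.log x))
    (fun x hx => ?_) ?_
  · rw [Set.uIcc_of_le hXY] at hx
    have h := (Real.hasDerivAt_log (show x ≠ 0 by linarith [hx.1])).log (log_ne (by linarith [hx.1]))
    refine h.congr_deriv ?_
    rw [div_eq_mul_one_div]
  · apply ContinuousOn.intervalIntegrable
    rw [Set.uIcc_of_le hXY]
    exact (continuousOn_id.inv₀ fun x hx => by simp only [id]; linarith [hx.1]).mul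
      (contOn_invlog (by linarith))

/-- Mertens-type upper bound for reciprocals of Beurling primes in `(X, Y]`. -/
lemma sum_inv_le {p : ℕ → ℝ} {α K X₀ X Y : ℝ} (hpt : Tendsto p atTop atTop)
    (hα : 0 < α) (hα1 : α < 1) (h : PiBound p α K X₀) (hX : X₀ ≤ X) (hXY : X ≤ Y)
    {G : Finset ℕ} (hG : ∀ j, j ∈ G ↔ X < p j ∧ p j ≤ Y) :
    ∑ j ∈ G, (p j)⁻¹ ≤ Real.log (Real.log Y) - Real.log (Real.log X) +
      2 * K * (1 + 1 / (1 - α)) * X ^ (α - 1) := by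
  have hX3 : 3 ≤ X := h.2.1.trans hX
  have h1 := sum_cpow_sub_integral hpt hα hα1 h hX hXY hG (s := 1) (by simp)
  have h2 : ∑ j ∈ G, (p j : ℂ) ^ (-1 : ℂ) = ((∑ j ∈ G, (p j)⁻¹ : ℝ) : ℂ) := by
    push_cast
    exact Finset.sum_congr rfl fun j _ => Complex.cpow_neg_one _
  have h3 : ∫ x in X..Y, (x:ℂ) ^ (-1:ℂ) * ((1 / Real.log x : ℝ) : ℂ) =
      ((Real.log (Real.log Y) - Real.log (Real.log X) : ℝ) : ℂ) := by
    rw [← integral_inv_mul_log hX3 hXY, ← intervalIntegral.integral_ofReal]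
    congr 1; ext x
    rw [Complex.cpow_neg_one]; push_cast; rfl
  rw [h2, h3, ← Complex.ofReal_sub, Complex.norm_real, norm_one] at h1
  linarith [(abs_le.mp h1).2]

lemma exp_neg_log {x : ℝ} (hx : 0 < x) : Real.exp (-Real.log x) = x⁻¹ := by
  rw [Real.exp_neg, Real.exp_log hx]

lemma sum_exp_neg_le {p : ℕ → ℝ} {α : ℝ} (hp1 : ∀ j, 1 < p j) (hpt : Tendsto p atTop atTop)
    (hα : 0 < α) (hα1 : α < 1) (hb : ∃ K X₀, PiBound p α K X₀) :
    ∃ C, 0 ≤ C ∧ ∀ (G : Finset ℕ) (u : ℝ), 0 ≤ u → (∀ j ∈ G, Real.log (p j) ≤ u) →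
      ∑ j ∈ G, Real.exp (-Real.log (p j)) ≤ Real.log (1 + u) + C := by
  obtain ⟨K, X₀, h⟩ := hb
  have hp0 : ∀ j, 0 < p j := fun j => one_pos.trans (hp1 j)
  have hX3 := h.2.1
  have hK := h.1
  obtain ⟨H, hH⟩ := finite_le hpt X₀
  have hc : 0 ≤ 2 * K * (1 + 1 / (1 - α)) * X₀ ^ (α - 1) := by
    have : 0 < 1 - α := by linarith
    positivity
  have hH0 : 0 ≤ ∑ j ∈ H, (p j)⁻¹ := Finset.sum_nonneg fun j _ => (inv_pos.mpr (hp0 j)).le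
  refine ⟨∑ j ∈ H, (p j)⁻¹ + 2 * K * (1 + 1 / (1 - α)) * X₀ ^ (α - 1), by positivity,
    fun G u hu hG => ?_⟩
  obtain ⟨H', hH'⟩ := finite_Ioc hpt X₀ (max X₀ (Real.exp u))
  have h1 := sum_inv_le hpt hα hα1 h le_rfl (le_max_left X₀ (Real.exp u)) hH'
  have hsub : G ⊆ H ∪ H' := by
    intro j hj
    rw [Finset.mem_union, hH, hH']
    by_cases hjX : p j ≤ X₀
    · exact Or.inl hjX
    · refine Or.inr ⟨not_le.mp hjX, le_max_of_le_right ?_⟩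
      exact (Real.log_le_iff_le_exp (hp0 j)).mp (hG j hj)
  have hpos : ∀ j, 0 ≤ (p j)⁻¹ := fun j => (inv_pos.mpr (hp0 j)).le
  have hll : Real.log (Real.log (max X₀ (Real.exp u))) - Real.log (Real.log X₀) ≤ Real.log (1 + u) := by
    have hl : 0 ≤ Real.log (1 + u) := Real.log_nonneg (by linarith)
    rcases le_total (Real.exp u) X₀ with h2 | h2
    · rw [max_eq_left h2]; simpa using hl
    · rw [max_eq_right h2, Real.log_exp]
      have h3 : Real.exp 1 ≤ X₀ := by linarith [Real.exp_one_lt_d9]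
      have h4 : 0 ≤ Real.log (Real.log X₀) :=
        Real.log_nonneg ((Real.le_log_iff_exp_le (by linarith)).mpr h3)
      have h5 : 0 < u := by
        have := Real.exp_le_exp.mp (h3.trans h2); linarith
      linarith [Real.log_le_log h5 (show u ≤ 1 + u by linarith)]
  calc ∑ j ∈ G, Real.exp (-Real.log (p j)) = ∑ j ∈ G, (p j)⁻¹ :=
        Finset.sum_congr rfl fun j _ => exp_neg_log (hp0 j)
    _ ≤ ∑ j ∈ H ∪ H', (p j)⁻¹ := Finset.sum_le_sum_of_subset_of_nonneg hsub fun j _ _ => hpos j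
    _ ≤ ∑ j ∈ H, (p j)⁻¹ + ∑ j ∈ H', (p j)⁻¹ := by
        rw [← Finset.sum_union_inter]
        linarith [Finset.sum_nonneg (s := H ∩ H') fun j _ => hpos j]
    _ ≤ _ := by linarith

lemma exp_neg_lam (ℓ : ℕ → ℝ) (S : Finset ℕ) :
    Real.exp (-lam ℓ S) = ∏ j ∈ S, Real.exp (-ℓ j) := by
  rw [lam, ← Finset.sum_neg_distrib, Real.exp_sum]

/-- The sum of `1 / n` over squarefree `n` built from Beurling primes up to `exp u` is `O(1 + u)`. -/
lemma powerset_sum_le {p : ℕ → ℝ} {α : ℝ} (hp1 : ∀ j, 1 < p j) (hpt : Tendsto p atTop atTop)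
    (hα : 0 < α) (hα1 : α < 1) (hb : ∃ K X₀, PiBound p α K X₀) :
    ∃ C, 1 ≤ C ∧ ∀ (G : Finset ℕ) (u : ℝ), 0 ≤ u → (∀ j ∈ G, Real.log (p j) ≤ u) →
      ∑ S ∈ G.powerset, Real.exp (-lam (fun j => Real.log (p j)) S) ≤ C * (1 + u) := by
  obtain ⟨C, hC, h⟩ := sum_exp_neg_le hp1 hpt hα hα1 hb
  refine ⟨Real.exp C, Real.one_le_exp hC, fun G u hu hG => ?_⟩
  simp_rw [exp_neg_lam]
  rw [← Finset.prod_one_add]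
  calc ∏ j ∈ G, (1 + Real.exp (-Real.log (p j))) ≤
      ∏ j ∈ G, Real.exp (Real.exp (-Real.log (p j))) :=
        Finset.prod_le_prod (fun j _ => by positivity) fun j _ => by
          rw [add_comm]; exact Real.add_one_le_exp _
    _ = Real.exp (∑ j ∈ G, Real.exp (-Real.log (p j))) := (Real.exp_sum _ _).symm
    _ ≤ Real.exp (Real.log (1 + u) + C) := Real.exp_le_exp.mpr (h G u hu hG)
    _ = _ := by rw [Real.exp_add, Real.exp_log (by linarith), mul_comm]

/-- The hypothesis on the prime counting function gives the regularity of the logarithms of the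
Beurling primes: a Brun–Titchmarsh-type bound in short intervals and a Mertens-type bound. -/
lemma exists_reg {p : ℕ → ℝ} {α : ℝ} (hp1 : ∀ j, 1 < p j) (hpt : Tendsto p atTop atTop)
    (hα : 0 < α) (hα1 : α < 1) (hb : ∃ K X₀, PiBound p α K X₀) :
    ∃ C, Reg (fun j => Real.log (p j)) C ((1 + α) / 2) := by
  obtain ⟨C₁, hC₁, hm⟩ := powerset_sum_le hp1 hpt hα hα1 hb
  obtain ⟨K, X₀, h⟩ := hb
  have hp0 : ∀ j, 0 < p j := fun j => one_pos.trans (hp1 j)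
  have hl0 : ∀ j, 0 < Real.log (p j) := fun j => Real.log_pos (hp1 j)
  have hX3 := h.2.1
  have hK := h.1
  -- below `u₁` there are finitely many primes, whose contribution is absorbed in the constant
  set u₁ : ℝ := max (Real.log X₀) 1 with hu₁
  obtain ⟨H, hH⟩ := finite_le hpt (Real.exp (u₁ + 1))
  set M : ℝ := ∑ j ∈ H, Real.log (p j) with hM
  have hM0 : 0 ≤ M := Finset.sum_nonneg fun j _ => (hl0 j).le
  set κ : ℝ := (1 - α) / 2 with hκ
  have hκ0 : 0 < κ := by rw [hκ]; linarith
  set A : ℝ := 4 * K * Real.exp 1 / κ with hA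
  have hA0 : 0 ≤ A := by positivity
  set C : ℝ := C₁ + 4 + A + M * Real.exp 1 with hC
  have hMe : 0 ≤ M * Real.exp 1 := by positivity
  refine ⟨C, hl0, by linarith, by linarith, by linarith, ?_, ?_⟩
  · intro G u δ hδ hδ1
    have hβ0 : 0 < Real.exp ((1 + α) / 2 * u) := Real.exp_pos _
    have hδu : 0 ≤ δ * Real.exp u := by positivity
    rcases lt_or_ge u (-1) with hu | hu
    · rw [Finset.filter_eq_empty_iff.mpr, Finset.sum_empty]
      · have : 0 ≤ C := by linarith
        positivity
      · intro j _ hj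
        linarith [hl0 j, hj.2]
    rcases lt_or_ge u u₁ with hu' | hu'
    · have h1 : ∑ j ∈ G with (u < Real.log (p j) ∧ Real.log (p j) ≤ u + δ), Real.log (p j) ≤ M := by
        refine Finset.sum_le_sum_of_subset_of_nonneg (fun j hj => ?_) fun j _ _ => (hl0 j).le
        rw [Finset.mem_filter] at hj
        rw [hH]
        exact (Real.log_le_iff_le_exp (hp0 j)).mp (by linarith [hj.2.2])
      have h2 : Real.exp (-1) ≤ Real.exp ((1 + α) / 2 * u) := Real.exp_le_exp.mpr (by nlinarith)
      have h3 : M = M * Real.exp 1 * Real.exp (-1) := by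
        rw [mul_assoc, ← Real.exp_add]; simp
      calc _ ≤ M := h1
        _ = M * Real.exp 1 * Real.exp (-1) := h3
        _ ≤ C * (δ * Real.exp u + Real.exp ((1 + α) / 2 * u)) := by
          apply mul_le_mul (by linarith) (by linarith) (Real.exp_pos _).le (by linarith)
    · have hu1 : 1 ≤ u := (le_max_right _ _).trans hu'
      have hX : X₀ ≤ Real.exp u :=
        (Real.log_le_iff_le_exp (by linarith)).mp ((le_max_left _ _).trans hu')
      have hXY : Real.exp u ≤ Real.exp (u + δ) := Real.exp_le_exp.mpr (by linarith)
      obtain ⟨H', hH'⟩ := finite_Ioc hpt (Real.exp u) (Real.exp (u + δ))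
      have h1 : (H'.card : ℝ) = pin p (Real.exp (u + δ)) - pin p (Real.exp u) := by
        rw [← pin_sub hpt hXY le_rfl hH', Finset.sum_congr rfl fun j hj => if_pos ((hH' j).mp hj).2]
        simp
      have h2 := (abs_le.mp (pin_incr hα h hX hXY)).2
      have h3 : ∫ t in Real.exp u..Real.exp (u + δ), 1 / Real.log t ≤
          (Real.exp (u + δ) - Real.exp u) * (1 / u) := by
        have := intervalIntegral.integral_mono_on hXY
          (integrable_invlog (Real.one_lt_exp_iff.mpr (by linarith)) hXY)
          (intervalIntegrable_const (c := 1 / u)) (fun x hx => by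
            have : u ≤ Real.log x :=
              (Real.le_log_iff_exp_le (lt_of_lt_of_le (Real.exp_pos _) hx.1)).mpr hx.1
            exact one_div_le_one_div_of_le (by linarith) this)
        simpa using this
      have h4 : Real.exp (u + δ) - Real.exp u ≤ 2 * δ * Real.exp u := by
        have h5 := (abs_le.mp (Real.abs_exp_sub_one_le (x := δ) (by rw [abs_of_pos hδ]; exact hδ1))).2
        rw [abs_of_pos hδ] at h5
        rw [Real.exp_add]
        nlinarith [Real.exp_pos u]
      have h5 : (Real.exp (u + δ)) ^ α ≤ Real.exp 1 * Real.exp (α * u) := by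
        rw [← Real.exp_mul, ← Real.exp_add]
        exact Real.exp_le_exp.mpr (by nlinarith)
      have h6 : u * Real.exp (α * u) ≤ Real.exp ((1 + α) / 2 * u) / κ := by
        rw [le_div_iff₀ hκ0, show (1 + α) / 2 * u = κ * u + α * u by rw [hκ]; ring, Real.exp_add]
        have := Real.add_one_le_exp (κ * u)
        nlinarith [Real.exp_pos (α * u)]
      have hcard : (H'.card : ℝ) ≤ 2 * δ * Real.exp u * (1 / u) +
          2 * K * (Real.exp 1 * Real.exp (α * u)) := by
        have h7 : (Real.exp (u + δ) - Real.exp u) * (1 / u) ≤ 2 * δ * Real.exp u * (1 / u) := by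
          gcongr
        have h8 : 2 * K * (Real.exp (u + δ)) ^ α ≤ 2 * K * (Real.exp 1 * Real.exp (α * u)) := by
          gcongr
        linarith
      have h9 : ∑ j ∈ G with (u < Real.log (p j) ∧ Real.log (p j) ≤ u + δ), Real.log (p j) ≤
          ∑ j ∈ H', (2 * u) := by
        refine (Finset.sum_le_sum_of_subset_of_nonneg (fun j hj => ?_) fun j _ _ => (hl0 j).le).trans
          (Finset.sum_le_sum fun j hj => ?_)
        · rw [Finset.mem_filter] at hj
          rw [hH']
          exact ⟨(Real.lt_log_iff_exp_lt (hp0 j)).mp hj.2.1,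
            (Real.log_le_iff_le_exp (hp0 j)).mp hj.2.2⟩
        · have := (Real.log_le_iff_le_exp (hp0 j)).mpr ((hH' j).mp hj).2
          linarith
      calc _ ≤ ∑ j ∈ H', (2 * u) := h9
        _ = 2 * u * H'.card := by simp [mul_comm]
        _ ≤ 2 * u * (2 * δ * Real.exp u * (1 / u) + 2 * K * (Real.exp 1 * Real.exp (α * u))) := by
          gcongr
        _ = 4 * (δ * Real.exp u) + 4 * K * Real.exp 1 * (u * Real.exp (α * u)) := by
          field_simp; ring
        _ ≤ 4 * (δ * Real.exp u) + 4 * K * Real.exp 1 * (Real.exp ((1 + α) / 2 * u) / κ) := by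
          gcongr
        _ = 4 * (δ * Real.exp u) + A * Real.exp ((1 + α) / 2 * u) := by rw [hA]; ring
        _ ≤ C * (δ * Real.exp u) + C * Real.exp ((1 + α) / 2 * u) := by
          gcongr <;> linarith
        _ = _ := by ring
  · intro G u hu
    have h1 := hm (G.filter fun j => Real.log (p j) ≤ u) u hu (fun j hj => (Finset.mem_filter.mp hj).2)
    refine (Finset.sum_le_sum_of_subset_of_nonneg (fun S hS => ?_)
      fun S _ _ => (Real.exp_pos _).le).trans (h1.trans ?_)
    · rw [Finset.mem_filter, Finset.mem_powerset] at hS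
      rw [Finset.mem_powerset]
      intro j hj
      rw [Finset.mem_filter]
      exact ⟨hS.1 hj, (Finset.single_le_sum (f := fun j => Real.log (p j))
        (fun i _ => (hl0 i).le) hj).trans hS.2⟩
    · gcongr; linarith

/-! ### Approximation of the reciprocal zeta function by finite Euler products -/

lemma summable_exp_lam {ℓ : ℕ → ℝ} {C β : ℝ} (R : Reg ℓ C β) {σ : ℝ} (hσ : 1 < σ) :
    Summable (fun S : Finset ℕ => Real.exp (-(σ * lam ℓ S))) := by
  set k : ℝ := min 1 ((σ - 1) / 2) with hk
  have hk0 : 0 < k := lt_min one_pos (by linarith)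
  refine Summable.of_nonneg_of_le (fun S => (Real.exp_pos _).le) (fun S => ?_)
    ((summable_weight R).mul_left (1 / k ^ 2))
  set x := lam ℓ S with hx
  have hx0 : 0 ≤ x := lam_nonneg R.pos S
  have h1 : k * (1 + x) ≤ Real.exp ((σ - 1) / 2 * x) := by
    have h2 := Real.add_one_le_exp ((σ - 1) / 2 * x)
    have h3 : k ≤ 1 := min_le_left _ _
    have h4 : k * x ≤ (σ - 1) / 2 * x := mul_le_mul_of_nonneg_right (min_le_right _ _) hx0
    linarith
  have h2 : k ^ 2 * ((1 + x) * √(1 + x)) ≤ Real.exp ((σ - 1) * x) := by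
    have h3 : √(1 + x) ≤ 1 + x :=
      Real.sqrt_le_iff.mpr ⟨by linarith, by nlinarith⟩
    calc k ^ 2 * ((1 + x) * √(1 + x)) ≤ k ^ 2 * ((1 + x) * (1 + x)) := by gcongr
      _ = (k * (1 + x)) * (k * (1 + x)) := by ring
      _ ≤ Real.exp ((σ - 1) / 2 * x) * Real.exp ((σ - 1) / 2 * x) := by gcongr
      _ = _ := by rw [← Real.exp_add]; congr 1; ring
  rw [div_mul_div_comm, one_mul, le_div_iff₀ (by positivity)]
  calc _ ≤ Real.exp (-(σ * x)) * Real.exp ((σ - 1) * x) := by gcongr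
    _ = _ := by rw [← Real.exp_add]; congr 1; ring

lemma summable_exp_prime {ℓ : ℕ → ℝ} {C β : ℝ} (R : Reg ℓ C β) {σ : ℝ} (hσ : 1 < σ) :
    Summable (fun j : ℕ => Real.exp (-(σ * ℓ j))) := by
  have := (summable_exp_lam R hσ).comp_injective (Finset.singleton_injective (α := ℕ))
  simpa [Function.comp_def, lam] using this

lemma norm_prod_one_sub_sub_one_le (H : Finset ℕ) (z : ℕ → ℂ) (hz : ∀ j ∈ H, ‖z j‖ ≤ 1 / 2)
    (h1 : ‖∑ j ∈ H, z j‖ + ∑ j ∈ H, ‖z j‖ ^ 2 ≤ 1) :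
    ‖∏ j ∈ H, (1 - z j) - 1‖ ≤ 2 * (‖∑ j ∈ H, z j‖ + ∑ j ∈ H, ‖z j‖ ^ 2) := by
  have e : ∏ j ∈ H, (1 - z j) = Complex.exp (∑ j ∈ H, Complex.log (1 - z j)) := by
    rw [Complex.exp_sum]
    refine Finset.prod_congr rfl fun j hj => (Complex.exp_log ?_).symm
    intro h0
    have h2 : z j = 1 := (sub_eq_zero.mp h0).symm
    have h3 := hz j hj
    rw [h2] at h3
    norm_num at h3
  have hl : ‖∑ j ∈ H, Complex.log (1 - z j)‖ ≤ ‖∑ j ∈ H, z j‖ + ∑ j ∈ H, ‖z j‖ ^ 2 := by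
    have h2 : ∑ j ∈ H, Complex.log (1 - z j) =
        -(∑ j ∈ H, z j) + ∑ j ∈ H, (Complex.log (1 + -z j) - -z j) := by
      rw [Finset.sum_sub_distrib, Finset.sum_neg_distrib]
      simp [sub_eq_add_neg]
    rw [h2]
    refine (norm_add_le _ _).trans ?_
    rw [norm_neg]
    gcongr
    refine (norm_sum_le _ _).trans (Finset.sum_le_sum fun j hj => ?_)
    have h3 := Complex.norm_log_one_add_sub_self_le (z := -z j) (by
      rw [norm_neg]; linarith [hz j hj])
    rw [norm_neg] at h3
    refine h3.trans ?_
    have h4 : (1 - ‖z j‖)⁻¹ ≤ 2 := by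
      rw [inv_le_comm₀ (by linarith [hz j hj]) (by norm_num)]
      linarith [hz j hj]
    nlinarith [sq_nonneg ‖z j‖]
  rw [e]
  exact (Complex.norm_exp_sub_one_le (hl.trans h1)).trans (by linarith)

lemma norm_cpow_neg_le {x : ℝ} (hx : 1 < x) {s : ℂ} (hs : 1 ≤ s.re) : ‖(x:ℂ) ^ (-s)‖ ≤ x⁻¹ := by
  rw [Complex.norm_cpow_eq_rpow_re_of_pos (by linarith), ← Real.rpow_neg_one]
  exact Real.rpow_le_rpow_of_exponent_le hx.le (by simpa using hs)

/-- The tail `∑_{p_j > X} p_j⁻²`. -/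
noncomputable def tau (p : ℕ → ℝ) (X : ℝ) : ℝ := ∑' j, if X < p j then (p j)⁻¹ ^ 2 else 0

/-- Error term in approximating the reciprocal zeta function at height at most `T` by the Euler
product over Beurling primes up to `X`. -/
noncomputable def eta (p : ℕ → ℝ) (α K X T : ℝ) : ℝ :=
  2 / Real.log X + 2 * K * (1 + 3 * T / (1 - α)) * X ^ (α - 1) + tau p X

lemma tendsto_tau {p : ℕ → ℝ} (hs : Summable fun j => (p j)⁻¹ ^ 2) :
    Tendsto (tau p) atTop (nhds 0) := by
  have := tendsto_tsum_of_dominated_convergence (𝓕 := atTop) (f := fun (X : ℝ) j => if X < p j then (p j)⁻¹ ^ 2 else 0)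
    (g := fun _ => (0:ℝ)) hs (fun j => ?_) (Eventually.of_forall fun X j => ?_)
  · rw [tsum_zero] at this; exact this
  · refine tendsto_const_nhds.congr' ?_
    filter_upwards [eventually_ge_atTop (p j)] with X hX
    rw [if_neg (not_lt.mpr hX)]
  · split_ifs
    · rw [Real.norm_of_nonneg (by positivity)]
    · rw [norm_zero]; positivity

/-- Euler factors over `(X, Y]` multiply to nearly one, uniformly in `Y`. -/
lemma norm_prod_tail_le {p : ℕ → ℝ} {α K X₀ X Y T : ℝ} (hp1 : ∀ j, 1 < p j)
    (hpt : Tendsto p atTop atTop) (hsum : Summable fun j => (p j)⁻¹ ^ 2)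
    (hα : 0 < α) (hα1 : α < 1) (h : PiBound p α K X₀) (hX : X₀ ≤ X) (hXY : X ≤ Y)
    {H : Finset ℕ} (hH : ∀ j, j ∈ H ↔ X < p j ∧ p j ≤ Y) {s : ℂ} (hs : 1 ≤ s.re) (hs2 : s.re ≤ 2)
    (ht : 1 ≤ s.im) (hT : s.im ≤ T) (hη : eta p α K X T ≤ 1) :
    ‖∏ j ∈ H, (1 - (p j : ℂ) ^ (-s)) - 1‖ ≤ 2 * eta p α K X T := by
  have hK := h.1
  have hX3 : 3 ≤ X := h.2.1.trans hX
  have hα' : 0 < 1 - α := by linarith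
  have hlX : 0 < Real.log X := Real.log_pos (by linarith)
  have hs1 : 1 ≤ ‖s - 1‖ := by
    refine le_trans ?_ (Complex.abs_im_le_norm _)
    simp only [Complex.sub_im, Complex.one_im, sub_zero]
    exact ht.trans (le_abs_self _)
  have hsn : ‖s‖ ≤ 3 * T := by
    refine (Complex.norm_le_abs_re_add_abs_im s).trans ?_
    rw [abs_of_nonneg (by linarith), abs_of_nonneg (by linarith)]
    linarith
  have hne : s ≠ 1 := by
    rintro rfl
    norm_num at ht
  have h1 : ‖∑ j ∈ H, (p j : ℂ) ^ (-s)‖ ≤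
      2 / Real.log X + 2 * K * (1 + 3 * T / (1 - α)) * X ^ (α - 1) := by
    have ha := sum_cpow_sub_integral hpt hα hα1 h hX hXY hH hs
    have hb := norm_integral_cpow_div_log_le hX3 hXY hs hne
    have hc : 2 / (‖s - 1‖ * Real.log X) ≤ 2 / Real.log X := by
      apply div_le_div_of_nonneg_left (by norm_num) hlX
      nlinarith
    have hd : 2 * K * (1 + ‖s‖ / (1 - α)) * X ^ (α - 1) ≤
        2 * K * (1 + 3 * T / (1 - α)) * X ^ (α - 1) := by gcongr
    have := norm_le_norm_sub_add (∑ j ∈ H, (p j : ℂ) ^ (-s))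
      (∫ x in X..Y, (x:ℂ) ^ (-s) * ((1 / Real.log x : ℝ) : ℂ))
    linarith
  have h2 : ∑ j ∈ H, ‖(p j : ℂ) ^ (-s)‖ ^ 2 ≤ tau p X := by
    have hsum' : Summable fun j => if X < p j then (p j)⁻¹ ^ 2 else 0 := by
      refine Summable.of_nonneg_of_le (fun j => ?_) (fun j => ?_) hsum
      · split_ifs <;> positivity
      · split_ifs
        · exact le_rfl
        · positivity
    refine le_trans (Finset.sum_le_sum fun j hj => ?_)
      (hsum'.sum_le_tsum H fun j _ => by split_ifs <;> positivity)
    rw [if_pos ((hH j).mp hj).1]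
    gcongr
    exact norm_cpow_neg_le (hp1 j) hs
  have h3 : ‖∑ j ∈ H, (p j : ℂ) ^ (-s)‖ + ∑ j ∈ H, ‖(p j : ℂ) ^ (-s)‖ ^ 2 ≤ eta p α K X T := by
    unfold eta; linarith
  refine (norm_prod_one_sub_sub_one_le H (fun j => (p j : ℂ) ^ (-s)) (fun j hj => ?_)
    (h3.trans hη)).trans (by linarith)
  refine (norm_cpow_neg_le (hp1 j) hs).trans ?_
  rw [inv_eq_one_div]
  exact one_div_le_one_div_of_le (by norm_num) (by linarith [((hH j).mp hj).1])

lemma summable_norm_cpow {p : ℕ → ℝ} (hp1 : ∀ j, 1 < p j)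
    (hs : ∀ σ : ℝ, 1 < σ → Summable fun j => Real.exp (-(σ * Real.log (p j)))) {s : ℂ} (h : 1 < s.re) :
    Summable fun j => ‖(p j : ℂ) ^ (-s)‖ := by
  refine (hs _ h).congr fun j => ?_
  have : 0 < p j := one_pos.trans (hp1 j)
  rw [Complex.norm_cpow_eq_rpow_re_of_pos this, Real.rpow_def_of_pos this]
  congr 1
  simp; ring

lemma multipliable_euler {p : ℕ → ℝ} (hp1 : ∀ j, 1 < p j)
    (hs : ∀ σ : ℝ, 1 < σ → Summable fun j => Real.exp (-(σ * Real.log (p j)))) {s : ℂ} (h : 1 < s.re) :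
    Multipliable fun j => 1 - (p j : ℂ) ^ (-s) := by
  have := multipliable_one_add_of_summable (f := fun j => -(p j : ℂ) ^ (-s))
    (by simpa using summable_norm_cpow hp1 hs h)
  simpa [sub_eq_add_neg] using this

lemma euler_inv {p : ℕ → ℝ} {Z : ℂ → ℂ} (hp1 : ∀ j, 1 < p j)
    (hs : ∀ σ : ℝ, 1 < σ → Summable fun j => Real.exp (-(σ * Real.log (p j))))
    (hZprod : ∀ s : ℂ, 1 < s.re → Z s = ∏' j, (1 - (p j : ℂ) ^ (-s))⁻¹) {s : ℂ} (h : 1 < s.re) :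
    (Z s)⁻¹ = ∏' j, (1 - (p j : ℂ) ^ (-s)) := by
  have h1 := multipliable_euler hp1 hs h
  have h2 : ∏' j, (1 + -(p j : ℂ) ^ (-s)) ≠ 0 := by
    refine tprod_one_add_ne_zero_of_summable (fun j => ?_) (by simpa using summable_norm_cpow hp1 hs h)
    intro h0
    have h3 := norm_cpow_neg_le (hp1 j) h.le
    have h4 : (p j : ℂ) ^ (-s) = 1 := by linear_combination -h0
    rw [h4, norm_one] at h3
    exact absurd h3 (not_le.mpr (inv_lt_one_of_one_lt₀ (hp1 j)))
  simp_rw [← sub_eq_add_neg] at h2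
  rw [hZprod s h, h1.tprod_inv₀ h2, inv_inv]

/-- On the line `Re s = 1`, away from the pole, the reciprocal zeta function is approximated by a
finite Euler product. -/
lemma norm_inv_sub_euler_le {p : ℕ → ℝ} {α K X₀ X T : ℝ} {Z : ℂ → ℂ} (hp1 : ∀ j, 1 < p j)
    (hpt : Tendsto p atTop atTop)
    (hsum : ∀ σ : ℝ, 1 < σ → Summable fun j => Real.exp (-(σ * Real.log (p j))))
    (hα : 0 < α) (hα1 : α < 1) (h : PiBound p α K X₀) (hX : X₀ ≤ X)
    (hZprod : ∀ s : ℂ, 1 < s.re → Z s = ∏' j, (1 - (p j : ℂ) ^ (-s))⁻¹)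
    (hZc : ContinuousOn Z {s : ℂ | 1 ≤ s.re ∧ s ≠ 1})
    (hZne : ∀ s : ℂ, 1 ≤ s.re → s ≠ 1 → Z s ≠ 0)
    {G : Finset ℕ} (hG : ∀ j, j ∈ G ↔ p j ≤ X) {t : ℝ} (ht : 1 ≤ t) (hT : t ≤ T)
    (hη : eta p α K X T ≤ 1) :
    ‖(Z (1 + t * Complex.I))⁻¹ - ∏ j ∈ G, (1 - (p j : ℂ) ^ (-(1 + t * Complex.I)))‖ ≤
      2 * eta p α K X T * ‖∏ j ∈ G, (1 - (p j : ℂ) ^ (-(1 + t * Complex.I)))‖ := by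
  have hp0 : ∀ j, 0 < p j := fun j => one_pos.trans (hp1 j)
  have hsum2 : Summable fun j => (p j)⁻¹ ^ 2 := by
    refine (hsum 2 (by norm_num)).congr fun j => ?_
    rw [← exp_neg_log (hp0 j), ← Real.exp_nat_mul]
    congr 1; push_cast; ring
  -- the bound to the right of the line, by letting the upper end of the product tend to infinity
  have key : ∀ s : ℂ, 1 < s.re → s.re ≤ 2 → s.im = t →
      ‖(Z s)⁻¹ - ∏ j ∈ G, (1 - (p j : ℂ) ^ (-s))‖ ≤
        2 * eta p α K X T * ‖∏ j ∈ G, (1 - (p j : ℂ) ^ (-s))‖ := by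
    intro s hs hs2 him
    choose Hf hHf using fun Y : ℝ => finite_le hpt Y
    have hHt : Tendsto Hf atTop atTop := by
      refine tendsto_atTop_finset_of_monotone (fun a b hab j hj => ?_) fun j => ⟨p j, ?_⟩
      · rw [hHf] at hj ⊢; exact hj.trans hab
      · rw [hHf]
    have hlim : Tendsto (fun Y => ∏ j ∈ Hf Y, (1 - (p j : ℂ) ^ (-s))) atTop (nhds (Z s)⁻¹) := by
      rw [euler_inv hp1 hsum hZprod hs]
      exact (multipliable_euler hp1 hsum hs).hasProd.comp hHt
    refine le_of_tendsto (hlim.sub_const _).norm ?_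
    filter_upwards [eventually_ge_atTop X] with Y hY
    obtain ⟨H, hH⟩ := finite_Ioc hpt X Y
    have hd : Disjoint G H := by
      rw [Finset.disjoint_left]; intro j h1 h2
      exact absurd ((hG j).mp h1) (not_le.mpr ((hH j).mp h2).1)
    have hu : Hf Y = G ∪ H := by
      ext j
      rw [hHf, Finset.mem_union, hG, hH]
      constructor
      · intro h1
        by_cases h2 : p j ≤ X
        · exact Or.inl h2
        · exact Or.inr ⟨not_le.mp h2, h1⟩
      · rintro (h1 | h1)
        · exact h1.trans hY
        · exact h1.2
    rw [hu, Finset.prod_union hd]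
    have h3 := norm_prod_tail_le hp1 hpt hsum2 hα hα1 h hX hY hH hs.le hs2 (by rw [him]; exact ht)
      (by rw [him]; exact hT) hη
    rw [show ∀ a b : ℂ, a * b - a = a * (b - 1) by intros; ring, norm_mul, mul_comm]
    gcongr
  -- pass to the boundary
  set s₀ : ℂ := 1 + t * Complex.I with hs₀
  set g : ℝ → ℂ := fun σ => σ + t * Complex.I with hg
  have hgc : Continuous g := by rw [hg]; fun_prop
  have hg1 : g 1 = s₀ := by simp [hg, hs₀]
  have hne : ∀ σ, g σ ≠ 1 := by
    intro σ h0
    have := congrArg Complex.im h0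
    simp [hg] at this
    linarith
  have hgt : Tendsto g (nhdsWithin 1 (Set.Ioi 1)) (nhdsWithin s₀ {s : ℂ | 1 ≤ s.re ∧ s ≠ 1}) := by
    refine tendsto_nhdsWithin_iff.mpr ⟨?_, ?_⟩
    · rw [← hg1]; exact hgc.continuousAt.tendsto.mono_left nhdsWithin_le_nhds
    · filter_upwards [self_mem_nhdsWithin] with σ hσ
      exact ⟨by simpa [hg] using (le_of_lt hσ : (1:ℝ) ≤ σ), hne σ⟩
  have hmem : s₀ ∈ {s : ℂ | 1 ≤ s.re ∧ s ≠ 1} := ⟨by simp [hs₀], by rw [← hg1]; exact hne 1⟩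
  have hZt : Tendsto (fun σ => (Z (g σ))⁻¹) (nhdsWithin 1 (Set.Ioi 1)) (nhds (Z s₀)⁻¹) :=
    Tendsto.inv₀ ((hZc s₀ hmem).tendsto.comp hgt) (hZne s₀ hmem.1 hmem.2)
  have hFc : Continuous fun s : ℂ => ∏ j ∈ G, (1 - (p j : ℂ) ^ (-s)) := by
    refine continuous_finsetProd _ fun j _ => continuous_const.sub ?_
    exact continuous_neg.const_cpow (Or.inl (by exact_mod_cast (hp0 j).ne'))
  have hFt : Tendsto (fun σ => ∏ j ∈ G, (1 - (p j : ℂ) ^ (-(g σ)))) (nhdsWithin 1 (Set.Ioi 1))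
      (nhds (∏ j ∈ G, (1 - (p j : ℂ) ^ (-s₀)))) := by
    rw [← hg1]
    exact (hFc.comp hgc).continuousAt.tendsto.mono_left nhdsWithin_le_nhds
  refine le_of_tendsto_of_tendsto (hZt.sub hFt).norm (hFt.norm.const_mul _) ?_
  filter_upwards [Ioc_mem_nhdsGT (show (1:ℝ) < 2 by norm_num)] with σ hσ
  exact key (g σ) (by simpa [hg] using hσ.1) (by simpa [hg] using hσ.2) (by simp [hg])

/-! ### Means of generalized Dirichlet series -/

lemma norm_cexp_osc (y t : ℝ) : ‖Complex.exp (-(Complex.I * y * t))‖ = 1 := by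
  rw [show -(Complex.I * (y:ℂ) * t) = ((-(y * t) : ℝ) : ℂ) * Complex.I by push_cast; ring]
  exact Complex.norm_exp_ofReal_mul_I _

lemma norm_mean_osc_le (y : ℝ) {T : ℝ} (hT : 1 ≤ T) :
    ‖(1 / T : ℂ) * ∫ t in (1:ℝ)..T, Complex.exp (-(Complex.I * y * t))‖ ≤ 1 := by
  have h := intervalIntegral.norm_integral_le_of_norm_le_const (a := 1) (b := T) (C := 1)
    (f := fun t : ℝ => Complex.exp (-(Complex.I * y * t))) fun t _ => (norm_cexp_osc y t).le
  rw [abs_of_nonneg (by linarith)] at h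
  rw [norm_mul, norm_div, norm_one, Complex.norm_real, Real.norm_of_nonneg (by linarith),
    one_div_mul_eq_div, div_le_one (by linarith)]
  linarith

lemma tendsto_mean_osc (y : ℝ) :
    Tendsto (fun T : ℝ => (1 / T : ℂ) * ∫ t in (1:ℝ)..T, Complex.exp (-(Complex.I * y * t))) atTop
      (nhds (if y = 0 then 1 else 0)) := by
  split_ifs with hy
  · subst hy
    have h1 : Tendsto (fun T : ℝ => ((1 - T⁻¹ : ℝ) : ℂ)) atTop (nhds ((1 - 0 : ℝ) : ℂ)) :=
      (Complex.continuous_ofReal.tendsto _).comp (tendsto_const_nhds.sub tendsto_inv_atTop_zero)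
    rw [sub_zero, Complex.ofReal_one] at h1
    refine h1.congr' ?_
    filter_upwards [eventually_gt_atTop 0] with T hT
    have : (T:ℂ) ≠ 0 := by exact_mod_cast hT.ne'
    simp
    field_simp
  · have hc : -(Complex.I * (y:ℂ)) ≠ 0 := by simp [hy]
    rw [tendsto_zero_iff_norm_tendsto_zero]
    refine squeeze_zero' (g := fun T : ℝ => (2 / |y|) * T⁻¹) (Eventually.of_forall fun T => norm_nonneg _) ?_ ?_
    · filter_upwards [eventually_gt_atTop 0] with T hT
      have e : ∫ t in (1:ℝ)..T, Complex.exp (-(Complex.I * y * t)) =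
          (Complex.exp (-(Complex.I * y * T)) - Complex.exp (-(Complex.I * y * (1:ℝ)))) /
            (-(Complex.I * y)) := by
        have := integral_exp_mul_complex (a := 1) (b := T) hc
        simpa [neg_mul] using this
      rw [e, norm_mul, norm_div, norm_div, norm_one, Complex.norm_real, Real.norm_of_nonneg hT.le,
        norm_neg, norm_mul, Complex.norm_I, Complex.norm_real, Real.norm_eq_abs, one_mul, mul_comm,
        one_div]
      gcongr
      refine (norm_sub_le _ _).trans ?_
      rw [norm_cexp_osc, norm_cexp_osc]; norm_num
    · simpa using tendsto_inv_atTop_zero.const_mul (2 / |y|)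

/-- Bohr's formula: the Fourier coefficients of an absolutely convergent generalized Dirichlet series
are recovered as means. -/
lemma tendsto_bohr_mean {ι : Type} [Countable ι] (c : ι → ℂ) (l : ι → ℝ) (hc : Summable fun i => ‖c i‖)
    (x : ℝ) :
    Tendsto (fun T : ℝ => (1 / T : ℂ) * ∫ t in (1:ℝ)..T,
      (∑' i, c i * Complex.exp (-(Complex.I * l i * t))) * Complex.exp (Complex.I * x * t)) atTop
      (nhds (∑' i, if l i = x then c i else 0)) := by
  have e : ∀ T : ℝ, (1 / T : ℂ) * ∫ t in (1:ℝ)..T,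
      (∑' i, c i * Complex.exp (-(Complex.I * l i * t))) * Complex.exp (Complex.I * x * t) =
      ∑' i, c i * ((1 / T : ℂ) * ∫ t in (1:ℝ)..T, Complex.exp (-(Complex.I * (l i - x : ℝ) * t))) := by
    intro T
    have h := intervalIntegral.hasSum_integral_of_dominated_convergence (μ := MeasureTheory.volume)
      (a := 1) (b := T) (F := fun i (t:ℝ) => c i * Complex.exp (-(Complex.I * (l i - x : ℝ) * t)))
      (f := fun t : ℝ => (∑' i, c i * Complex.exp (-(Complex.I * l i * t))) * Complex.exp (Complex.I * x * t))
      (fun i _ => ‖c i‖) (fun i => ?_) (fun i => ?_) ?_ ?_ ?_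
    · rw [← h.tsum_eq, ← tsum_mul_left]
      refine tsum_congr fun i => ?_
      rw [intervalIntegral.integral_const_mul]; ring
    · exact Continuous.aestronglyMeasurable (by fun_prop)
    · refine Eventually.of_forall fun t _ => ?_
      rw [norm_mul, norm_cexp_osc, mul_one]
    · exact Eventually.of_forall fun t _ => hc
    · exact intervalIntegrable_const
    · refine Eventually.of_forall fun t _ => ?_
      have hs : Summable fun i => c i * Complex.exp (-(Complex.I * l i * t)) := by
        refine Summable.of_norm ?_
        simpa [norm_cexp_osc] using hc
      have := hs.hasSum.mul_right (Complex.exp (Complex.I * x * t))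
      refine this.congr_fun fun i => ?_
      rw [mul_assoc (c i), ← Complex.exp_add]
      congr 2; push_cast; ring
  simp_rw [e]
  have := tendsto_tsum_of_dominated_convergence (𝓕 := atTop) (g := fun i => if l i = x then c i else 0)
    (f := fun (T : ℝ) i => c i * ((1 / T : ℂ) * ∫ t in (1:ℝ)..T, Complex.exp (-(Complex.I * (l i - x : ℝ) * t))))
    hc (fun i => ?_) ?_
  · exact this
  · have h := (tendsto_mean_osc (l i - x)).const_mul (c i)
    simpa [sub_eq_zero] using h
  · filter_upwards [eventually_ge_atTop 1] with T hT i
    rw [norm_mul]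
    exact mul_le_of_le_one_right (norm_nonneg _) (norm_mean_osc_le _ hT)

/-- Two absolutely convergent generalized Dirichlet series with the same values on a half-line have
the same coefficients. -/
lemma coeff_unique {ι κ : Type} [Countable ι] [Countable κ] (c : ι → ℂ) (l : ι → ℝ) (c' : κ → ℂ)
    (l' : κ → ℝ) (hc : Summable fun i => ‖c i‖) (hc' : Summable fun i => ‖c' i‖)
    (h : ∀ t : ℝ, 1 ≤ t → ∑' i, c i * Complex.exp (-(Complex.I * l i * t)) =
      ∑' i, c' i * Complex.exp (-(Complex.I * l' i * t))) (x : ℝ) :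
    (∑' i, if l i = x then c i else 0) = ∑' i, if l' i = x then c' i else 0 := by
  refine tendsto_nhds_unique (tendsto_bohr_mean c l hc x)
    ((tendsto_bohr_mean c' l' hc' x).congr' ?_)
  filter_upwards [eventually_ge_atTop 1] with T hT
  congr 1
  refine intervalIntegral.integral_congr fun t ht => ?_
  rw [Set.uIcc_of_le hT] at ht
  rw [h t ht.1]

/-- Mean square of a trigonometric polynomial with distinct frequencies. -/
lemma tendsto_mean_sq_poly {ι : Type} (s : Finset ι) (c : ι → ℝ) (l : ι → ℝ)
    (hl : Function.Injective l) :
    Tendsto (fun T : ℝ => (1 / T) * ∫ t in (1:ℝ)..T,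
      ‖∑ i ∈ s, (c i : ℂ) * Complex.exp (-(Complex.I * l i * t))‖ ^ 2) atTop (nhds (∑ i ∈ s, c i ^ 2)) := by
  have hsq : ∀ t : ℝ, ((‖∑ i ∈ s, (c i : ℂ) * Complex.exp (-(Complex.I * l i * t))‖ ^ 2 : ℝ) : ℂ) =
      ∑ i ∈ s, ∑ j ∈ s, ((c i * c j : ℝ) : ℂ) * Complex.exp (-(Complex.I * (l i - l j : ℝ) * t)) := by
    intro t
    rw [Complex.ofReal_pow, ← Complex.mul_conj', map_sum, Finset.sum_mul_sum]
    refine Finset.sum_congr rfl fun i _ => Finset.sum_congr rfl fun j _ => ?_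
    rw [map_mul, ← Complex.exp_conj, Complex.conj_ofReal, mul_mul_mul_comm, ← Complex.exp_add]
    push_cast
    congr 2
    simp only [map_neg, map_mul, Complex.conj_I, Complex.conj_ofReal]
    ring
  have hlim : Tendsto (fun T : ℝ => ∑ i ∈ s, ∑ j ∈ s, ((c i * c j : ℝ) : ℂ) *
      ((1 / T : ℂ) * ∫ t in (1:ℝ)..T, Complex.exp (-(Complex.I * (l i - l j : ℝ) * t)))) atTop
      (nhds (∑ i ∈ s, ∑ j ∈ s, ((c i * c j : ℝ) : ℂ) * (if l i - l j = 0 then 1 else 0))) :=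
    tendsto_finsetSum _ fun i _ => tendsto_finsetSum _ fun j _ => (tendsto_mean_osc _).const_mul _
  have hval : (∑ i ∈ s, ∑ j ∈ s, ((c i * c j : ℝ) : ℂ) * (if l i - l j = 0 then (1:ℂ) else 0)) =
      ((∑ i ∈ s, c i ^ 2 : ℝ) : ℂ) := by
    push_cast
    refine Finset.sum_congr rfl fun i hi => ?_
    rw [Finset.sum_eq_single i]
    · simp [sq]
    · intro j _ hj
      rw [if_neg, mul_zero]
      intro h0
      exact hj (hl (sub_eq_zero.mp h0)).symm
    · exact fun h0 => absurd hi h0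
  rw [hval] at hlim
  have := (Complex.continuous_re.tendsto _).comp hlim
  rw [Complex.ofReal_re] at this
  refine this.congr fun T => ?_
  have hintg : ∀ i j, IntervalIntegrable (fun t : ℝ => ((c i * c j : ℝ) : ℂ) *
      Complex.exp (-(Complex.I * (l i - l j : ℝ) * t))) MeasureTheory.volume 1 T :=
    fun i j => Continuous.intervalIntegrable (by fun_prop) _ _
  have h2 : ∑ i ∈ s, ∑ j ∈ s, ((c i * c j : ℝ) : ℂ) *
      ((1 / T : ℂ) * ∫ t in (1:ℝ)..T, Complex.exp (-(Complex.I * (l i - l j : ℝ) * t))) =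
      (((1 / T) * ∫ t in (1:ℝ)..T,
        ‖∑ i ∈ s, (c i : ℂ) * Complex.exp (-(Complex.I * l i * t))‖ ^ 2 : ℝ) : ℂ) := by
    rw [Complex.ofReal_mul, ← intervalIntegral.integral_ofReal]
    simp_rw [hsq]
    rw [intervalIntegral.integral_finsetSum fun i _ =>
      Continuous.intervalIntegrable (by fun_prop) _ _, Finset.mul_sum]
    refine Finset.sum_congr rfl fun i _ => ?_
    rw [intervalIntegral.integral_finsetSum fun j _ => hintg i j, Finset.mul_sum]
    refine Finset.sum_congr rfl fun j _ => ?_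
    rw [intervalIntegral.integral_const_mul]
    push_cast; ring
  simp only [Function.comp_apply]
  rw [h2, Complex.ofReal_re]

/-- The term of the squarefree Dirichlet series at `σ + i t` attached to the finite set `S` of
Beurling primes. -/
noncomputable def trm (ℓ : ℕ → ℝ) (σ : ℝ) (S : Finset ℕ) (t : ℝ) : ℂ :=
  (((-1) ^ S.card * Real.exp (-(σ * lam ℓ S)) : ℝ) : ℂ) *
    Complex.exp (-(Complex.I * lam ℓ S * t))

lemma prod_neg_cpow {p : ℕ → ℝ} (hp1 : ∀ j, 1 < p j) (σ t : ℝ) (S : Finset ℕ) :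
    ∏ j ∈ S, (-(p j : ℂ) ^ (-(σ + t * Complex.I))) = trm (fun j => Real.log (p j)) σ S t := by
  have h1 : ∀ j, -(p j : ℂ) ^ (-(σ + t * Complex.I)) =
      (-1) * Complex.exp (-(σ * Real.log (p j)) + -(Complex.I * Real.log (p j) * t)) := by
    intro j
    have hp : 0 < p j := one_pos.trans (hp1 j)
    rw [Complex.cpow_def_of_ne_zero (by exact_mod_cast hp.ne'), ← Complex.ofReal_log hp.le, neg_one_mul]
    congr 2; ring
  simp_rw [h1]
  rw [Finset.prod_mul_distrib, Finset.prod_const, ← Complex.exp_sum, Finset.sum_add_distrib,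
    Complex.exp_add, trm, lam]
  push_cast
  rw [Finset.sum_neg_distrib, Finset.sum_neg_distrib, ← Finset.mul_sum, ← Finset.sum_mul,
    ← Finset.mul_sum]
  ring

lemma prod_euler_eq {p : ℕ → ℝ} (hp1 : ∀ j, 1 < p j) (t : ℝ) (G : Finset ℕ) :
    ∏ j ∈ G, (1 - (p j : ℂ) ^ (-(1 + t * Complex.I))) =
      ∑ S ∈ G.powerset, trm (fun j => Real.log (p j)) 1 S t := by
  simp_rw [sub_eq_add_neg]
  rw [Finset.prod_one_add]
  refine Finset.sum_congr rfl fun S _ => ?_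
  have := prod_neg_cpow hp1 1 t S
  rwa [Complex.ofReal_one] at this

lemma norm_trm (ℓ : ℕ → ℝ) (σ : ℝ) (S : Finset ℕ) (t : ℝ) :
    ‖trm ℓ σ S t‖ = Real.exp (-(σ * lam ℓ S)) := by
  rw [trm, norm_mul, norm_cexp_osc, mul_one, Complex.norm_real, norm_mul, norm_pow, norm_neg,
    norm_one, one_pow, one_mul, Real.norm_of_nonneg (Real.exp_pos _).le]

/-- Mean square of a sum over squarefree Beurling integers supported on the primes in `G`. -/
lemma mean_sq_trm_le {ℓ : ℕ → ℝ} {C β : ℝ} (R : Reg ℓ C β) :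
    ∃ K, 0 < K ∧ ∀ (G : Finset ℕ) (s : Finset (Finset ℕ)) (T : ℝ), s ⊆ G.powerset → 1 ≤ T →
      ∫ t in (1:ℝ)..T, ‖∑ S ∈ s, trm ℓ 1 S t‖ ^ 2 ≤
        K * (∑ S ∈ G.powerset, Real.exp (-lam ℓ S) +
          T * ∑ S ∈ s, Real.exp (-lam ℓ S) / ((1 + lam ℓ S) * √(1 + lam ℓ S))) := by
  obtain ⟨K, hK, hms⟩ := mean_sq_le
  obtain ⟨D, hD, hcnt⟩ := cnt_le R
  refine ⟨K * D, by positivity, fun G s T hs hT => ?_⟩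
  have hT0 : 0 < T := by linarith
  set a : Finset ℕ → ℂ := fun S => (((-1) ^ S.card * Real.exp (-(1 * lam ℓ S)) : ℝ) : ℂ) with ha
  have han : ∀ S, ‖a S‖ = Real.exp (-lam ℓ S) := by
    intro S
    rw [ha]; simp only
    rw [Complex.norm_real, norm_mul, norm_pow, norm_neg, norm_one, one_pow, one_mul, one_mul,
      Real.norm_of_nonneg (Real.exp_pos _).le]
  have h1 := hms s a (lam ℓ) T hT
  have hin : ∀ S ∈ s, ∑ S' ∈ s with ⌈T * lam ℓ S'⌉ = ⌈T * lam ℓ S⌉, ‖a S'‖ ≤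
      D * (1 / T + 1 / ((1 + lam ℓ S) * √(1 + lam ℓ S))) := by
    intro S hS
    have hl := lam_nonneg R.pos S
    set k := ⌈T * lam ℓ S⌉ with hk
    -- frequencies in the bin `k` lie in `(u, u + 1 / T]` with `u ≥ -1`
    set u : ℝ := ((k:ℝ) - 1) / T with hu
    have hmem : ∀ S', ⌈T * lam ℓ S'⌉ = k → u < lam ℓ S' ∧ lam ℓ S' ≤ u + 1 / T := by
      intro S' h
      have h2 := Int.ceil_lt_add_one (T * lam ℓ S')
      have h3 := Int.le_ceil (T * lam ℓ S')
      rw [h] at h2 h3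
      constructor
      · rw [hu, div_lt_iff₀ hT0]; linarith
      · rw [hu, ← add_div, le_div_iff₀ hT0]; linarith
    have hm := hmem S rfl
    have hT1 : 1 / T ≤ 1 := by rw [div_le_one hT0]; exact hT
    have hu1 : -1 ≤ u := by linarith [hm.2]
    have h2 : ∑ S' ∈ s with ⌈T * lam ℓ S'⌉ = k, ‖a S'‖ ≤ Real.exp (-u) * cnt ℓ G u (1 / T) := by
      refine sum_le_mul_cnt _ _ (Real.exp_pos _).le fun S' hS' => ?_
      rw [Finset.mem_filter] at hS'
      have h3 := hmem S' hS'.2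
      refine ⟨Finset.mem_powerset.mp (hs hS'.1), h3.1, h3.2, ?_⟩
      rw [han]
      exact Real.exp_le_exp.mpr (by linarith [h3.1])
    have h3 := hcnt G u (1 / T) (by positivity) hT1 hu1
    have h4 : 1 / ((2 + u) * √(2 + u)) ≤ 1 / ((1 + lam ℓ S) * √(1 + lam ℓ S)) := by
      have h5 : 1 + lam ℓ S ≤ 2 + u := by linarith [hm.2]
      have h6 : 0 ≤ 2 + u := by linarith
      gcongr
    calc _ ≤ Real.exp (-u) * cnt ℓ G u (1 / T) := h2
      _ ≤ Real.exp (-u) * (D * Real.exp u * (1 / T + 1 / ((2 + u) * √(2 + u)))) := by gcongr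
      _ = D * (1 / T + 1 / ((2 + u) * √(2 + u))) * (Real.exp (-u) * Real.exp u) := by ring
      _ = D * (1 / T + 1 / ((2 + u) * √(2 + u))) := by rw [← Real.exp_add]; simp
      _ ≤ _ := by gcongr
  calc ∫ t in (1:ℝ)..T, ‖∑ S ∈ s, trm ℓ 1 S t‖ ^ 2
      ≤ K * T * ∑ S ∈ s, ‖a S‖ * ∑ S' ∈ s with ⌈T * lam ℓ S'⌉ = ⌈T * lam ℓ S⌉, ‖a S'‖ := h1
    _ ≤ K * T * ∑ S ∈ s, ‖a S‖ * (D * (1 / T + 1 / ((1 + lam ℓ S) * √(1 + lam ℓ S)))) := by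
        gcongr with S hS
        exact hin S hS
    _ = K * D * (∑ S ∈ s, Real.exp (-lam ℓ S) +
          T * ∑ S ∈ s, Real.exp (-lam ℓ S) / ((1 + lam ℓ S) * √(1 + lam ℓ S))) := by
        rw [Finset.mul_sum, Finset.mul_sum, ← Finset.sum_add_distrib, Finset.mul_sum]
        refine Finset.sum_congr rfl fun S _ => ?_
        rw [han]
        field_simp
    _ ≤ _ := by
        gcongr

/-! ### Mean-square approximation and passage to the limit -/

lemma mean_sq_triangle {f g : ℝ → ℂ} (hf : ContinuousOn f (Set.Ici 1)) (hg : ContinuousOn g (Set.Ici 1))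
    {η T : ℝ} (hη : 0 < η) (hT : 1 ≤ T) :
    (1 / T) * ∫ t in (1:ℝ)..T, ‖f t‖ ^ 2 ≤ (1 + η) * ((1 / T) * ∫ t in (1:ℝ)..T, ‖g t‖ ^ 2) +
      (1 + 1 / η) * ((1 / T) * ∫ t in (1:ℝ)..T, ‖f t - g t‖ ^ 2) := by
  have hi : ∀ h : ℝ → ℂ, ContinuousOn h (Set.Ici 1) →
      IntervalIntegrable (fun t => ‖h t‖ ^ 2) MeasureTheory.volume 1 T := by
    intro h hh
    apply ContinuousOn.intervalIntegrable
    rw [Set.uIcc_of_le hT]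
    exact (hh.mono Set.Icc_subset_Ici_self).norm.pow 2
  have h1 : ∫ t in (1:ℝ)..T, ‖f t‖ ^ 2 ≤
      ∫ t in (1:ℝ)..T, ((1 + η) * ‖g t‖ ^ 2 + (1 + 1 / η) * ‖f t - g t‖ ^ 2) := by
    refine intervalIntegral.integral_mono_on hT (hi f hf)
      (((hi g hg).const_mul _).add ((hi _ (hf.sub hg)).const_mul _)) fun t _ => ?_
    have h2 : ‖f t‖ ≤ ‖f t - g t‖ + ‖g t‖ := norm_le_norm_sub_add _ _
    have h3 : ‖f t‖ ^ 2 ≤ (‖f t - g t‖ + ‖g t‖) ^ 2 := by gcongr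
    refine h3.trans (sub_nonneg.mp ?_)
    have h4 : (1 + η) * ‖g t‖ ^ 2 + (1 + 1 / η) * ‖f t - g t‖ ^ 2 - (‖f t - g t‖ + ‖g t‖) ^ 2 =
        (η * ‖g t‖ - ‖f t - g t‖) ^ 2 / η := by
      field_simp; ring
    rw [h4]; positivity
  have hfg : IntervalIntegrable (fun t => ‖f t - g t‖ ^ 2) MeasureTheory.volume 1 T :=
    hi _ (hf.sub hg)
  rw [intervalIntegral.integral_add ((hi g hg).const_mul _) (hfg.const_mul _),
    intervalIntegral.integral_const_mul, intervalIntegral.integral_const_mul] at h1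
  have hT0 : 0 ≤ 1 / T := by positivity
  have := mul_le_mul_of_nonneg_left h1 hT0
  linarith

/-- If `f` is approximated in mean square by functions `P u` having mean squares the partial sums of
`∑ a n`, with `a n ≥ 0`, then that series converges and its sum is the mean square of `f`. -/
lemma mean_sq_limit {f : ℝ → ℂ} (hf : ContinuousOn f (Set.Ici 1)) {a : ℕ → ℝ} (ha : ∀ n, 0 ≤ a n)
    {N : ℝ → Finset ℕ} (hN : Tendsto N atTop atTop) {P : ℝ → ℝ → ℂ} (hP : ∀ u, Continuous (P u))
    (hPm : ∀ u, Tendsto (fun T : ℝ => (1 / T) * ∫ t in (1:ℝ)..T, ‖P u t‖ ^ 2) atTop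
      (nhds (∑ n ∈ N u, a n)))
    (hE : ∀ ε : ℝ, 0 < ε → ∃ u₀, ∀ u, u₀ ≤ u → ∀ᶠ T : ℝ in atTop,
      (1 / T) * ∫ t in (1:ℝ)..T, ‖f t - P u t‖ ^ 2 ≤ ε) :
    Tendsto (fun T : ℝ => (1 / T) * ∫ t in (1:ℝ)..T, ‖f t‖ ^ 2) atTop (nhds (∑' n, a n)) ∧
      Summable a := by
  have hsymm : ∀ u (T : ℝ), ∫ t in (1:ℝ)..T, ‖P u t - f t‖ ^ 2 = ∫ t in (1:ℝ)..T, ‖f t - P u t‖ ^ 2 := by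
    intro u T; simp_rw [norm_sub_rev (P u _)]
  -- the partial sums are bounded, by comparison with the single approximant `P u₀`
  have hsum : Summable a := by
    obtain ⟨u₀, h0⟩ := hE 1 one_pos
    refine summable_of_sum_le ha (c := 2 * (2 * (∑ n ∈ N u₀, a n + 1) + 2) + 2) fun U => ?_
    obtain ⟨v, hv, hUv⟩ := ((eventually_ge_atTop u₀).and (hN.eventually (eventually_ge_atTop U))).exists
    refine (Finset.sum_le_sum_of_subset_of_nonneg hUv fun n _ _ => ha n).trans ?_
    refine le_of_tendsto (hPm v) ?_
    filter_upwards [h0 u₀ le_rfl, h0 v hv, eventually_ge_atTop 1,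
      (hPm u₀).eventually_le_const (show ∑ n ∈ N u₀, a n < ∑ n ∈ N u₀, a n + 1 by linarith)]
      with T h1 h2 hT h3
    have h4 := mean_sq_triangle hf (hP u₀).continuousOn one_pos hT
    have h5 := mean_sq_triangle (hP v).continuousOn hf one_pos hT
    rw [hsymm] at h5
    norm_num at h1 h2 h3 h4 h5 ⊢
    linarith
  refine ⟨?_, hsum⟩
  set S := ∑' n, a n with hS
  have hS0 : 0 ≤ S := tsum_nonneg ha
  have hNS : Tendsto (fun u => ∑ n ∈ N u, a n) atTop (nhds S) := hsum.hasSum.comp hN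
  rw [Metric.tendsto_nhds]
  intro ε hε
  set η : ℝ := min 1 (ε / (2 * (S + 8))) with hη
  have hη0 : 0 < η := lt_min one_pos (by positivity)
  have hη1 : η ≤ 1 := min_le_left _ _
  have hηε : (S + 8) * η < ε := by
    have : η ≤ ε / (2 * (S + 8)) := min_le_right _ _
    rw [le_div_iff₀ (by positivity)] at this
    linarith
  obtain ⟨u₀, h0⟩ := hE (η ^ 2) (by positivity)
  obtain ⟨u, hu, hus⟩ := ((eventually_ge_atTop u₀).and
    (hNS.eventually_const_le (show S - η < S by linarith))).exists
  have hus' : ∑ n ∈ N u, a n ≤ S := hsum.sum_le_tsum _ fun n _ => ha n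
  filter_upwards [h0 u hu, eventually_ge_atTop 1,
    (hPm u).eventually_le_const (show ∑ n ∈ N u, a n < S + η by linarith),
    (hPm u).eventually_const_le (show S - 2 * η < ∑ n ∈ N u, a n by linarith)] with T h1 hT h2 h3
  have h4 := mean_sq_triangle hf (hP u).continuousOn hη0 hT
  have h5 := mean_sq_triangle (hP u).continuousOn hf hη0 hT
  rw [hsymm] at h5
  have h6 : (1 + 1 / η) * ((1 / T) * ∫ t in (1:ℝ)..T, ‖f t - P u t‖ ^ 2) ≤ η ^ 2 + η := by
    calc _ ≤ (1 + 1 / η) * η ^ 2 := by gcongr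
      _ = _ := by field_simp
  set Φ := (1 / T) * ∫ t in (1:ℝ)..T, ‖f t‖ ^ 2 with hΦ
  set Ψ := (1 / T) * ∫ t in (1:ℝ)..T, ‖P u t‖ ^ 2 with hΨ
  have hηη : η ^ 2 ≤ η := by nlinarith
  have h7 : Φ ≤ S + (S + 4) * η := by nlinarith
  rw [Real.dist_eq, abs_lt]
  constructor
  · have h8 : S - 4 * η ≤ Φ + η * Φ := by linarith
    have h9 : η * Φ ≤ η * (S + (S + 4) * η) := by gcongr
    have h10 : η * (S + (S + 4) * η) ≤ η * S + (S + 4) * η := by nlinarith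
    nlinarith
  · nlinarith

lemma tendsto_eta {p : ℕ → ℝ} {α K : ℝ} (hα1 : α < 1) (hs : Summable fun j => (p j)⁻¹ ^ 2) :
    Tendsto (fun T : ℝ => eta p α K (T ^ (2 / (1 - α))) T) atTop (nhds 0) := by
  have hα' : 0 < 1 - α := by linarith
  have hA : 0 < 2 / (1 - α) := by positivity
  have hX : Tendsto (fun T : ℝ => T ^ (2 / (1 - α))) atTop atTop := tendsto_rpow_atTop hA
  have h1 : Tendsto (fun T : ℝ => 2 / Real.log (T ^ (2 / (1 - α)))) atTop (nhds 0) :=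
    (tendsto_const_nhds.div_atTop (Real.tendsto_log_atTop.comp hX))
  have h2 : Tendsto (fun T : ℝ => 2 * K * (1 + 3 * T / (1 - α)) * (T ^ (2 / (1 - α))) ^ (α - 1)) atTop
      (nhds 0) := by
    have h3 : Tendsto (fun T : ℝ => 2 * K * (T⁻¹ * T⁻¹ + 3 / (1 - α) * T⁻¹)) atTop
        (nhds (2 * K * (0 * 0 + 3 / (1 - α) * 0))) :=
      ((tendsto_inv_atTop_zero.mul tendsto_inv_atTop_zero).add
        (tendsto_inv_atTop_zero.const_mul _)).const_mul _
    simp only [mul_zero, add_zero] at h3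
    refine h3.congr' ?_
    filter_upwards [eventually_gt_atTop 0] with T hT
    have e : (T ^ (2 / (1 - α))) ^ (α - 1) = T⁻¹ * T⁻¹ := by
      rw [← Real.rpow_mul hT.le, show 2 / (1 - α) * (α - 1) = -1 + -1 by field_simp; ring,
        Real.rpow_add hT, Real.rpow_neg_one]
    rw [e]
    field_simp
  have := (h1.add h2).add ((tendsto_tau hs).comp hX)
  simpa [eta, Function.comp_def] using this

lemma finite_lam {p : ℕ → ℝ} (hp1 : ∀ j, 1 < p j) (hpt : Tendsto p atTop atTop) (u : ℝ) :
    ∃ B : Finset (Finset ℕ), ∀ S, S ∈ B ↔ lam (fun j => Real.log (p j)) S ≤ u := by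
  obtain ⟨G, hG⟩ := finite_le hpt (Real.exp u)
  refine ⟨G.powerset.filter fun S => lam (fun j => Real.log (p j)) S ≤ u, fun S => ?_⟩
  rw [Finset.mem_filter, and_iff_right_iff_imp, Finset.mem_powerset]
  intro hS j hj
  rw [hG, ← Real.log_le_iff_le_exp (one_pos.trans (hp1 j))]
  exact (Finset.single_le_sum (f := fun j => Real.log (p j))
        (fun i _ => (Real.log_pos (hp1 i)).le) hj).trans hS

lemma contOn_inv_line {Z : ℂ → ℂ} (hZc : ContinuousOn Z {s : ℂ | 1 ≤ s.re ∧ s ≠ 1})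
    (hZne : ∀ s : ℂ, 1 ≤ s.re → s ≠ 1 → Z s ≠ 0) :
    ContinuousOn (fun t : ℝ => (Z (1 + t * Complex.I))⁻¹) (Set.Ici 1) := by
  have h : ∀ t ∈ Set.Ici (1:ℝ), (1 ≤ (1 + t * Complex.I : ℂ).re ∧ (1 + t * Complex.I : ℂ) ≠ 1) := by
    intro t ht
    refine ⟨by simp, fun h0 => ?_⟩
    have := congrArg Complex.im h0
    simp at this
    linarith [Set.mem_Ici.mp ht]
  refine ContinuousOn.inv₀ (hZc.comp (by fun_prop) fun t ht => h t ht) fun t ht => ?_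
  exact hZne _ (h t ht).1 (h t ht).2

/-- Mean-square approximation of the reciprocal zeta function on the line `Re s = 1` by partial sums
of its squarefree Dirichlet series. -/
lemma mean_sq_approx {p : ℕ → ℝ} {α : ℝ} {Z : ℂ → ℂ} (hp1 : ∀ j, 1 < p j)
    (hpt : Tendsto p atTop atTop) (hα : 0 < α) (hα1 : α < 1) (hb : ∃ K X₀, PiBound p α K X₀)
    (hZprod : ∀ s : ℂ, 1 < s.re → Z s = ∏' j, (1 - (p j : ℂ) ^ (-s))⁻¹)
    (hZc : ContinuousOn Z {s : ℂ | 1 ≤ s.re ∧ s ≠ 1})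
    (hZne : ∀ s : ℂ, 1 ≤ s.re → s ≠ 1 → Z s ≠ 0)
    {B : ℝ → Finset (Finset ℕ)} (hB : ∀ u S, S ∈ B u ↔ lam (fun j => Real.log (p j)) S ≤ u)
    (ε : ℝ) (hε : 0 < ε) :
    ∃ u₀, ∀ u, u₀ ≤ u → ∀ᶠ T : ℝ in atTop,
      (1 / T) * ∫ t in (1:ℝ)..T, ‖(Z (1 + t * Complex.I))⁻¹ -
        ∑ S ∈ B u, trm (fun j => Real.log (p j)) 1 S t‖ ^ 2 ≤ ε := by
  have hp0 : ∀ j, 0 < p j := fun j => one_pos.trans (hp1 j)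
  obtain ⟨C', R⟩ := exists_reg hp1 hpt hα hα1 hb
  obtain ⟨C, hC, hpow⟩ := powerset_sum_le hp1 hpt hα hα1 hb
  obtain ⟨K', X₀, hPi⟩ := hb
  obtain ⟨K, hK, hms⟩ := mean_sq_trm_le R
  have hsum : ∀ σ : ℝ, 1 < σ → Summable fun j => Real.exp (-(σ * Real.log (p j))) :=
    fun σ hσ => summable_exp_prime R hσ
  have hsum2 : Summable fun j => (p j)⁻¹ ^ 2 := by
    refine (hsum 2 (by norm_num)).congr fun j => ?_
    rw [← exp_neg_log (hp0 j), ← Real.exp_nat_mul]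
    congr 1; push_cast; ring
  set ℓ : ℕ → ℝ := fun j => Real.log (p j) with hℓ
  set A : ℝ := 2 / (1 - α) with hA
  have hA0 : 0 < A := by rw [hA]; have : 0 < 1 - α := by linarith
                         positivity
  -- outside a finite family `S₀` the weight has sum at most `ε / (16 K)`; all sets `S` with
  -- `lam ℓ S > u` are outside `S₀` once `u` exceeds every frequency in `S₀`
  obtain ⟨S₀, hS₀⟩ := summable_iff_vanishing_norm.mp (summable_weight R) (ε / (16 * K)) (by positivity)
  refine ⟨∑ S ∈ S₀, lam ℓ S, fun u hu => ?_⟩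
  have hS₀u : ∀ S ∈ S₀, lam ℓ S ≤ u := fun S hS =>
    (Finset.single_le_sum (fun S _ => lam_nonneg R.pos S) hS).trans hu
  set M : ℝ := ∑ S ∈ B u, Real.exp (-lam ℓ S) with hM
  have hη := tendsto_eta (K := K') hα1 hsum2
  have hX : Tendsto (fun T : ℝ => T ^ A) atTop atTop := tendsto_rpow_atTop hA0
  have hlog : Tendsto (fun T : ℝ => Real.log T / T) atTop (nhds 0) := by
    have := (isLittleO_log_rpow_atTop one_pos).tendsto_div_nhds_zero
    simpa using this
  have hg : Tendsto (fun T : ℝ => 8 * K * (C * (T⁻¹ + A * (Real.log T / T))) +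
      8 * (eta p α K' (T ^ A) T) ^ 2 * M ^ 2) atTop
      (nhds (8 * K * (C * (0 + A * 0)) + 8 * 0 ^ 2 * M ^ 2)) :=
    (((tendsto_inv_atTop_zero.add (hlog.const_mul A)).const_mul C).const_mul _).add
      (((hη.pow 2).const_mul 8).mul_const _)
  norm_num at hg
  filter_upwards [eventually_ge_atTop 1, hX.eventually (eventually_ge_atTop X₀),
    hX.eventually (eventually_ge_atTop (Real.exp u)),
    hη.eventually_le_const (show (0:ℝ) < 1 / 2 by norm_num),
    hg.eventually_le_const (show (0:ℝ) < ε / 2 by linarith)] with T hT hTX hTu hη2 hgT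
  have hT0 : 0 < T := by linarith
  obtain ⟨G, hG⟩ := finite_le hpt (T ^ A)
  have hBG : B u ⊆ G.powerset := by
    intro S hS
    rw [Finset.mem_powerset]
    intro j hj
    rw [hG]
    refine le_trans ?_ hTu
    rw [← Real.log_le_iff_le_exp (hp0 j)]
    exact (Finset.single_le_sum (f := ℓ) (fun i _ => (R.pos i).le) hj).trans ((hB u S).mp hS)
  set e := eta p α K' (T ^ A) T with he
  have hdiff : ∀ t : ℝ, ∑ S ∈ G.powerset, trm ℓ 1 S t - ∑ S ∈ B u, trm ℓ 1 S t =
      ∑ S ∈ G.powerset \ B u, trm ℓ 1 S t := by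
    intro t
    rw [← Finset.sum_sdiff hBG]; ring
  -- the Euler product error is relative, `2 e ‖F‖`, and `e ≤ 1 / 2`, so it is absorbed by the tail
  -- `F - P` and the vanishing term `e M`
  have hpt' : ∀ t ∈ Set.Icc 1 T, ‖(Z (1 + t * Complex.I))⁻¹ - ∑ S ∈ B u, trm ℓ 1 S t‖ ^ 2 ≤
      8 * ‖∑ S ∈ G.powerset \ B u, trm ℓ 1 S t‖ ^ 2 + 8 * e ^ 2 * M ^ 2 := by
    intro t ht
    have h1 := norm_inv_sub_euler_le hp1 hpt hsum hα hα1 hPi hTX hZprod hZc hZne hG ht.1 ht.2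
      (by rw [← he]; linarith)
    rw [prod_euler_eq hp1, ← he] at h1
    set F := ∑ S ∈ G.powerset, trm ℓ 1 S t with hF
    set P := ∑ S ∈ B u, trm ℓ 1 S t with hP
    rw [← hdiff t]
    have hPM : ‖P‖ ≤ M := by
      refine (norm_sum_le _ _).trans (le_of_eq (Finset.sum_congr rfl fun S _ => ?_))
      rw [norm_trm, one_mul]
    have he0 : 0 ≤ 2 * e * ‖F‖ := (norm_nonneg _).trans h1
    have h2 : ‖F‖ ≤ ‖F - P‖ + ‖P‖ := norm_le_norm_sub_add _ _
    have h3 : ‖(Z (1 + t * Complex.I))⁻¹ - P‖ ≤ ‖(Z (1 + t * Complex.I))⁻¹ - F‖ + ‖F - P‖ :=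
      norm_sub_le_norm_sub_add_norm_sub _ _ _
    have h4 : 2 * e * ‖F‖ ≤ ‖F - P‖ + 2 * |e| * M := by
      calc 2 * e * ‖F‖ ≤ 2 * |e| * ‖F‖ := by gcongr; exact le_abs_self e
        _ ≤ _ := ?_
      rcases le_or_gt 0 e with h5 | h5
      · rw [abs_of_nonneg h5]
        nlinarith [norm_nonneg (F - P), norm_nonneg P]
      · have h6 : ‖F‖ = 0 := by nlinarith [norm_nonneg F]
        rw [h6, mul_zero]
        have : 0 ≤ M := (norm_nonneg _).trans hPM
        positivity
    have h5 : ‖(Z (1 + t * Complex.I))⁻¹ - P‖ ≤ 2 * ‖F - P‖ + 2 * |e| * M := by linarith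
    have h6 : 8 * e ^ 2 * M ^ 2 = 2 * (2 * |e| * M) ^ 2 := by
      rw [mul_pow, mul_pow, sq_abs]; ring
    rw [h6]
    calc _ ≤ (2 * ‖F - P‖ + 2 * |e| * M) ^ 2 := by gcongr
      _ ≤ _ := by nlinarith [sq_nonneg (2 * ‖F - P‖ - 2 * |e| * M)]
  have hcP : ∀ s : Finset (Finset ℕ), Continuous fun t : ℝ => ∑ S ∈ s, trm ℓ 1 S t := by
    intro s; unfold trm; fun_prop
  have hintg : ∫ t in (1:ℝ)..T, ‖(Z (1 + t * Complex.I))⁻¹ - ∑ S ∈ B u, trm ℓ 1 S t‖ ^ 2 ≤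
      ∫ t in (1:ℝ)..T, (8 * ‖∑ S ∈ G.powerset \ B u, trm ℓ 1 S t‖ ^ 2 + 8 * e ^ 2 * M ^ 2) := by
    refine intervalIntegral.integral_mono_on hT ?_ ?_ hpt'
    · apply ContinuousOn.intervalIntegrable
      rw [Set.uIcc_of_le hT]
      exact (((contOn_inv_line hZc hZne).mono Set.Icc_subset_Ici_self).sub
        (hcP _).continuousOn).norm.pow 2
    · exact Continuous.intervalIntegrable (((hcP _).norm.pow 2).const_mul 8 |>.add continuous_const) _ _
  have hcs : Continuous fun t : ℝ => 8 * ‖∑ S ∈ G.powerset \ B u, trm ℓ 1 S t‖ ^ 2 :=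
    continuous_const.mul ((hcP _).norm.pow 2)
  rw [intervalIntegral.integral_add (hcs.intervalIntegrable _ _) intervalIntegrable_const, intervalIntegral.integral_const_mul, intervalIntegral.integral_const,
    smul_eq_mul] at hintg
  have hm := hms G (G.powerset \ B u) T Finset.sdiff_subset hT
  have hlT : 0 ≤ A * Real.log T := mul_nonneg hA0.le (Real.log_nonneg hT)
  have hpw := hpow G (A * Real.log T) hlT fun j hj => by
    rw [← Real.log_rpow hT0]
    exact Real.log_le_log (hp0 j) ((hG j).mp hj)
  have htail : ∑ S ∈ G.powerset \ B u, Real.exp (-lam ℓ S) / ((1 + lam ℓ S) * √(1 + lam ℓ S)) ≤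
      ε / (16 * K) := by
    refine (le_abs_self _).trans (hS₀ _ ?_).le
    rw [Finset.disjoint_left]
    intro S hS hS'
    exact (Finset.mem_sdiff.mp hS).2 ((hB u S).mpr (hS₀u S hS'))
  have hfin : ∫ t in (1:ℝ)..T, ‖(Z (1 + t * Complex.I))⁻¹ - ∑ S ∈ B u, trm ℓ 1 S t‖ ^ 2 ≤
      8 * (K * (C * (1 + A * Real.log T) + T * (ε / (16 * K)))) + T * (8 * e ^ 2 * M ^ 2) := by
    refine hintg.trans (add_le_add ?_ ?_)
    · refine mul_le_mul_of_nonneg_left (hm.trans ?_) (by norm_num)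
      gcongr
    · gcongr
      linarith
  calc _ ≤ (1 / T) * (8 * (K * (C * (1 + A * Real.log T) + T * (ε / (16 * K)))) +
        T * (8 * e ^ 2 * M ^ 2)) := by gcongr
    _ = (8 * K * (C * (T⁻¹ + A * (Real.log T / T))) + 8 * e ^ 2 * M ^ 2) + ε / 2 := by
        field_simp; ring
    _ ≤ ε := by linarith

/-! ### Uniqueness of coefficients and the second moment -/

lemma cpow_div_eq {ν : ℝ} (hν : 0 < ν) (e : ℤ) (σ t : ℝ) :
    (e : ℂ) / (ν : ℂ) ^ (σ + t * Complex.I : ℂ) =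
      ((e * Real.exp (-(σ * Real.log ν)) : ℝ) : ℂ) * Complex.exp (-(Complex.I * Real.log ν * t)) := by
  rw [Complex.cpow_def_of_ne_zero (by exact_mod_cast hν.ne'), ← Complex.ofReal_log hν.le, div_eq_mul_inv,
    ← Complex.exp_neg]
  push_cast
  rw [mul_assoc, ← Complex.exp_add]
  congr 2; ring

/-- The partial sums of the squarefree Dirichlet series of the reciprocal zeta function coincide with
those of its Dirichlet series `∑ e n / ν n ^ s` over distinct integers, since both have the same
coefficients. -/
lemma sum_trm_eq {p ν : ℕ → ℝ} {e : ℕ → ℤ} {Z : ℂ → ℂ} (hp1 : ∀ j, 1 < p j)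
    (hsum : ∀ σ : ℝ, 1 < σ → Summable fun j => Real.exp (-(σ * Real.log (p j))))
    (hsumS : Summable fun S : Finset ℕ => Real.exp (-(2 * lam (fun j => Real.log (p j)) S)))
    (hν0 : ∀ n, 0 < ν n)
    (hZinv : ∀ s : ℂ, 1 < s.re → (Z s)⁻¹ = ∑' m, (e m : ℂ) / (ν m : ℂ) ^ s)
    (hZprod : ∀ s : ℂ, 1 < s.re → Z s = ∏' j, (1 - (p j : ℂ) ^ (-s))⁻¹)
    (hZne : ∀ s : ℂ, 1 ≤ s.re → s ≠ 1 → Z s ≠ 0)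
    {u : ℝ} {B : Finset (Finset ℕ)} (hB : ∀ S, S ∈ B ↔ lam (fun j => Real.log (p j)) S ≤ u)
    {N : Finset ℕ} (hN : ∀ n, n ∈ N ↔ Real.log (ν n) ≤ u) (t : ℝ) :
    ∑ S ∈ B, trm (fun j => Real.log (p j)) 1 S t =
      ∑ n ∈ N, ((e n / ν n : ℝ) : ℂ) * Complex.exp (-(Complex.I * Real.log (ν n) * t)) := by
  classical
  set ℓ : ℕ → ℝ := fun j => Real.log (p j) with hℓ
  set c : Finset ℕ → ℂ := fun S => (((-1) ^ S.card * Real.exp (-(2 * lam ℓ S)) : ℝ) : ℂ) with hc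
  set c' : ℕ → ℂ := fun n => ((e n * Real.exp (-(2 * Real.log (ν n))) : ℝ) : ℂ) with hc'
  have hre : ∀ t : ℝ, 1 < (((2:ℝ):ℂ) + t * Complex.I).re := fun t => by simp
  have hcs : Summable fun S => ‖c S‖ := by
    refine hsumS.congr fun S => ?_
    have := norm_trm ℓ 2 S 0
    rw [← this, trm]
    simp [hc]
  -- a divergent series would have the junk value `0`, but the reciprocal zeta value at `2` is nonzero
  have hc's : Summable fun n => ‖c' n‖ := by
    have h1 := hZinv (((2:ℝ):ℂ) + (0:ℝ) * Complex.I) (hre 0)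
    have h2 : Summable fun m => (e m : ℂ) / (ν m : ℂ) ^ (((2:ℝ):ℂ) + (0:ℝ) * Complex.I) := by
      by_contra h
      rw [tsum_eq_zero_of_not_summable h] at h1
      exact inv_ne_zero (hZne _ (hre 0).le (by norm_num)) h1
    refine h2.norm.congr fun n => ?_
    rw [cpow_div_eq (hν0 n), norm_mul, norm_cexp_osc, mul_one]
  have hser : ∀ t : ℝ, 1 ≤ t → ∑' S, c S * Complex.exp (-(Complex.I * lam ℓ S * t)) =
      ∑' n, c' n * Complex.exp (-(Complex.I * Real.log (ν n) * t)) := by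
    intro t _
    have h1 := hZinv _ (hre t)
    rw [euler_inv hp1 hsum hZprod (hre t)] at h1
    simp_rw [sub_eq_add_neg] at h1
    rw [tprod_one_add (summable_finsetProd_of_summable_norm
      (by simpa using summable_norm_cpow hp1 hsum (hre t)))] at h1
    simp_rw [prod_neg_cpow hp1, cpow_div_eq (hν0 _)] at h1
    exact h1
  have huniq := coeff_unique c (lam ℓ) c' (fun n => Real.log (ν n)) hcs hc's hser
  have hcoef : ∀ x, x ≤ u → ∑ S ∈ B with lam ℓ S = x, c S = ∑ n ∈ N with Real.log (ν n) = x, c' n := by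
    intro x hx
    have h1 := huniq x
    rw [tsum_eq_sum (s := B) fun S hS => if_neg fun h => hS ((hB S).mpr (h.le.trans hx)),
      tsum_eq_sum (s := N) fun n hn => if_neg fun h => hn ((hN n).mpr (h.le.trans hx))] at h1
    rwa [Finset.sum_filter, Finset.sum_filter]
  set W : Finset ℝ := B.image (lam ℓ) ∪ N.image (fun n => Real.log (ν n)) with hW
  have hWu : ∀ x ∈ W, x ≤ u := by
    intro x hx
    rw [hW, Finset.mem_union, Finset.mem_image, Finset.mem_image] at hx
    rcases hx with ⟨S, hS, rfl⟩ | ⟨n, hn, rfl⟩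
    · exact (hB S).mp hS
    · exact (hN n).mp hn
  rw [← Finset.sum_fiberwise_of_maps_to (s := B) (t := W) (g := lam ℓ)
      (fun S hS => Finset.mem_union_left _ (Finset.mem_image_of_mem _ hS)),
    ← Finset.sum_fiberwise_of_maps_to (s := N) (t := W) (g := fun n => Real.log (ν n))
      (fun n hn => Finset.mem_union_right _ (Finset.mem_image_of_mem _ hn))]
  refine Finset.sum_congr rfl fun x hx => ?_
  have h1 : ∀ S ∈ B.filter (fun S => lam ℓ S = x), trm ℓ 1 S t =
      c S * (((Real.exp x : ℝ) : ℂ) * Complex.exp (-(Complex.I * x * t))) := by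
    intro S hS
    obtain rfl := (Finset.mem_filter.mp hS).2
    rw [trm, hc, ← mul_assoc, ← Complex.ofReal_mul]
    congr 2
    rw [mul_assoc, ← Real.exp_add]
    congr 2; ring
  have h2 : ∀ n ∈ N.filter (fun n => Real.log (ν n) = x),
      ((e n / ν n : ℝ) : ℂ) * Complex.exp (-(Complex.I * Real.log (ν n) * t)) =
      c' n * (((Real.exp x : ℝ) : ℂ) * Complex.exp (-(Complex.I * x * t))) := by
    intro n hn
    obtain rfl := (Finset.mem_filter.mp hn).2
    rw [hc', ← mul_assoc, ← Complex.ofReal_mul]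
    congr 2
    rw [mul_assoc, ← Real.exp_add, div_eq_mul_inv, ← exp_neg_log (hν0 n)]
    congr 2; ring
  rw [Finset.sum_congr rfl h1, Finset.sum_congr rfl h2, ← Finset.sum_mul, ← Finset.sum_mul,
    hcoef x (hWu x hx)]

/-- with the same Beurling prime system assumptions
(`π_P(x) = Li(x) + O(x^α)`, `0 < α < 1`), the second moment of the reciprocal
Beurling zeta function on the 1-line exists:
`lim_{T→∞} (1/T)∫_1^T |ζ_P(1+it)|^{−2} dt = ∑ e n²/ν n²`, and the series
converges. Here `1/ζ_P(s) = ∏ (1 − p j^{−s}) = ∑ e n / ν n ^ s`. -/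
theorem stmt_13
    (p ν : ℕ → ℝ) (d : ℕ → ℕ) (e : ℕ → ℤ) (α : ℝ) (Z : ℂ → ℂ)
    (hp1 : ∀ j, 1 < p j) (hpm : Monotone p) (hpt : Tendsto p atTop atTop)
    (hν : StrictMono ν) (hν1 : ν 0 = 1) (hνt : Tendsto ν atTop atTop)
    (hα : 0 < α) (hα1 : α < 1)
    (hπ : (fun x : ℝ => (∑' j, if p j ≤ x then (1:ℝ) else 0)
        - ∫ t in (2:ℝ)..x, 1 / Real.log t) =O[atTop] (fun x : ℝ => x ^ α))
    (hZser : ∀ s : ℂ, 1 < s.re → Z s = ∑' m, (d m : ℂ) / (ν m : ℂ) ^ s)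
    (hZinv : ∀ s : ℂ, 1 < s.re → (Z s)⁻¹ = ∑' m, (e m : ℂ) / (ν m : ℂ) ^ s)
    (hZprod : ∀ s : ℂ, 1 < s.re → Z s = ∏' j, (1 - (p j : ℂ) ^ (-s))⁻¹)
    (hZc : ContinuousOn Z {s : ℂ | 1 ≤ s.re ∧ s ≠ 1})
    (hZne : ∀ s : ℂ, 1 ≤ s.re → s ≠ 1 → Z s ≠ 0) :
    Tendsto (fun T : ℝ => (1 / T) * ∫ t in (1:ℝ)..T, (‖Z (1 + t * Complex.I)‖ ^ 2)⁻¹)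
        atTop (nhds (∑' m, (e m : ℝ) ^ 2 / ν m ^ 2)) ∧
      Summable (fun m => (e m : ℝ) ^ 2 / ν m ^ 2) := by
  have hb := exists_piBound hπ
  obtain ⟨C, R⟩ := exists_reg hp1 hpt hα hα1 hb
  have hν0 : ∀ n, 0 < ν n := fun n =>
    lt_of_lt_of_le (by rw [hν1]; exact one_pos) (hν.monotone (Nat.zero_le n))
  choose B hB using finite_lam hp1 hpt
  choose N hN using fun u : ℝ => finite_le hνt (Real.exp u)
  have hN' : ∀ u n, n ∈ N u ↔ Real.log (ν n) ≤ u := fun u n => by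
    rw [hN, Real.log_le_iff_le_exp (hν0 n)]
  have hNt : Tendsto N atTop atTop := by
    refine tendsto_atTop_finset_of_monotone (fun a b hab n hn => ?_) fun n => ⟨Real.log (ν n), ?_⟩
    · rw [hN'] at hn ⊢; exact hn.trans hab
    · rw [hN']
  have hPQ : ∀ u t, ∑ S ∈ B u, trm (fun j => Real.log (p j)) 1 S t =
      ∑ n ∈ N u, ((e n / ν n : ℝ) : ℂ) * Complex.exp (-(Complex.I * Real.log (ν n) * t)) :=
    fun u t => sum_trm_eq hp1 (fun σ hσ => summable_exp_prime R hσ)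
      (summable_exp_lam R (by norm_num)) hν0 hZinv hZprod hZne (hB u) (hN' u) t
  have hinj : Function.Injective fun n => Real.log (ν n) := fun m n h =>
    hν.injective (Real.log_injOn_pos (hν0 m) (hν0 n) h)
  have main := mean_sq_limit (contOn_inv_line hZc hZne)
    (a := fun m => (e m : ℝ) ^ 2 / ν m ^ 2) (fun n => by positivity) hNt
    (P := fun u t => ∑ S ∈ B u, trm (fun j => Real.log (p j)) 1 S t)
    (fun u => by unfold trm; fun_prop) (fun u => ?_)
    (mean_sq_approx hp1 hpt hα hα1 hb hZprod hZc hZne hB)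
  · simpa only [norm_inv, inv_pow] using main
  · simp_rw [hPQ, ← div_pow]
    exact tendsto_mean_sq_poly (N u) (fun n => (e n : ℝ) / ν n) (fun n => Real.log (ν n)) hinj
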